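/- Every minimal brick has at least three vertices of degree three. -/

import Mathlib

open SimpleGraph

/-- A graph has a perfect matching. -/
def HasPerfectMatching {V : Type*} (G : SimpleGraph V) : Prop :=
  ∃ M : G.Subgraph, M.IsPerfectMatching

/-- `G` is 3-connected: at least 4 vertices, and deleting any at most 2
vertices leaves a connected graph. -/
def IsThreeConnected {V : Type*} [Fintype V] (G : SimpleGraph V) : Prop :=
  4 ≤ Fintype.card V ∧ ∀ S : Set V, S.ncard ≤ 2 → (G.induce Sᶜ).Connected

/-- A brick: a 3-connected graph such that deleting any two distinct vertices
leaves a graph with a perfect matching. -/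
def IsBrick {V : Type*} [Fintype V] (G : SimpleGraph V) : Prop :=
  IsThreeConnected G ∧
    ∀ u v : V, u ≠ v → HasPerfectMatching (G.induce ({u, v} : Set V)ᶜ)

/-- A minimal brick: a brick such that deleting any edge destroys brickness. -/
def IsMinimalBrick {V : Type*} [Fintype V] (G : SimpleGraph V) : Prop :=
  IsBrick G ∧ ∀ e ∈ G.edgeSet, ¬ IsBrick (G.deleteEdges {e})

set_option linter.unusedSectionVars false
set_option linter.unusedVariables false
set_option linter.unusedSimpArgs false

namespace MB

variable {V : Type*} [Fintype V] [DecidableEq V]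

lemma even_of_invol (P : Finset V) (M : V → V) (h1 : ∀ z ∈ P, M z ∈ P)
    (h2 : ∀ z ∈ P, M (M z) = z) (h3 : ∀ z ∈ P, M z ≠ z) : Even P.card := by
  have : ∑ z ∈ P, (1 : ZMod 2) = 0 :=
    Finset.sum_involution (fun z _ => M z) (fun z _ => by decide) (fun z hz _ => h3 z hz)
      (fun z hz => h1 z hz) (fun z hz => h2 z hz)
  simp at this
  exact (ZMod.natCast_eq_zero_iff_even).1 this

lemma match_count {ι : Type*} (M : V → V) (s0 s1 : V) (hs : s0 ≠ s1)
    (hM1 : ∀ z, z ≠ s0 → z ≠ s1 → M z ≠ s0 ∧ M z ≠ s1 ∧ M z ≠ z ∧ M (M z) = z)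
    (T : Finset V) (h0 : s0 ∈ T) (h1 : s1 ∈ T) (J : Finset ι) (f : ι → Finset V)
    (hodd : ∀ j ∈ J, Odd (f j).card) (hd : ∀ j ∈ J, Disjoint (f j) T)
    (hdd : ∀ i ∈ J, ∀ j ∈ J, i ≠ j → Disjoint (f i) (f j))
    (hsep : ∀ j ∈ J, ∀ x ∈ f j, M x ∈ f j ∨ M x ∈ T) : J.card + 2 ≤ T.card := by
  have hne : ∀ j ∈ J, ∀ x ∈ f j, x ≠ s0 ∧ x ≠ s1 := by
    intro j hj x hx
    have := Finset.disjoint_left.1 (hd j hj) hx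
    constructor <;> rintro rfl <;> contradiction
  have key : ∀ j ∈ J, ∃ x ∈ f j, M x ∈ T := by
    intro j hj
    by_contra hcon
    push Not at hcon
    have := even_of_invol (f j) M (fun z hz => (hsep j hj z hz).resolve_right (hcon z hz))
      (fun z hz => (hM1 z (hne j hj z hz).1 (hne j hj z hz).2).2.2.2)
      (fun z hz => (hM1 z (hne j hj z hz).1 (hne j hj z hz).2).2.2.1)
    exact (Nat.not_even_iff_odd.2 (hodd j hj)) this
  have : Nonempty V := ⟨s0⟩
  choose! g hg1 hg2 using key
  have hinj : Set.InjOn (fun j => M (g j)) (J : Set ι) := by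
    intro i hi j hj hij
    by_contra hne'
    have e1 := (hM1 (g i) (hne i hi _ (hg1 i hi)).1 (hne i hi _ (hg1 i hi)).2).2.2.2
    have e2 := (hM1 (g j) (hne j hj _ (hg1 j hj)).1 (hne j hj _ (hg1 j hj)).2).2.2.2
    have : g i = g j := by rw [← e1, ← e2]; exact congrArg M hij
    exact Finset.disjoint_left.1 (hdd i hi j hj hne') (hg1 i hi) (this ▸ hg1 j hj)
  have : J.card ≤ ((T.erase s0).erase s1).card := by
    apply Finset.card_le_card_of_injOn (fun j => M (g j)) _ hinj
    intro j hj
    have := hM1 (g j) (hne j hj _ (hg1 j hj)).1 (hne j hj _ (hg1 j hj)).2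
    simp [this.1, this.2.1, hg2 j hj]
  rw [Finset.card_erase_of_mem (by simp [hs.symm, h1]), Finset.card_erase_of_mem h0] at this
  have h2 : 2 ≤ T.card := by
    rw [← Finset.card_pair hs]
    apply Finset.card_le_card
    intro x; simp; rintro (rfl | rfl) <;> assumption
  omega

/-- Matching function avoiding two vertices. -/
def MF (G : SimpleGraph V) (s0 s1 : V) (M : V → V) : Prop :=
  (∀ z, z ≠ s0 → z ≠ s1 → M z ≠ s0 ∧ M z ≠ s1 ∧ M z ≠ z ∧ M (M z) = z) ∧
  (∀ z, z ≠ s0 → z ≠ s1 → G.Adj z (M z))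

lemma exists_MF (G : SimpleGraph V) (s0 s1 : V)
    (h : HasPerfectMatching (G.induce ({s0, s1} : Set V)ᶜ)) : ∃ M, MF G s0 s1 M := by
  obtain ⟨P, hP⟩ := h
  rw [Subgraph.isPerfectMatching_iff] at hP
  have key : ∀ z, z ≠ s0 → z ≠ s1 → ∃ y, y ≠ s0 ∧ y ≠ s1 ∧ ∃ (h1 : z ∈ ({s0, s1} : Set V)ᶜ)
      (h2 : y ∈ ({s0, s1} : Set V)ᶜ), P.Adj ⟨z, h1⟩ ⟨y, h2⟩ := by
    intro z h0 h1
    obtain ⟨⟨y, hy⟩, hy1, -⟩ := hP ⟨z, by simp [h0, h1]⟩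
    have hy' := hy
    simp at hy'
    exact ⟨y, hy'.1, hy'.2, by simp [h0, h1], hy, hy1⟩
  choose! M hM using key
  refine ⟨M, ?_, ?_⟩
  · intro z h0 h1
    obtain ⟨a, b, c, d, e⟩ := hM z h0 h1
    obtain ⟨a', b', c', d', e'⟩ := hM (M z) a b
    refine ⟨a, b, ?_, ?_⟩
    · intro heq
      have := P.adj_sub e
      simp at this
      exact G.ne_of_adj this heq.symm
    · have := (hP ⟨M z, d⟩).unique e' e.symm
      simpa using this
  · intro z h0 h1
    obtain ⟨a, b, c, d, e⟩ := hM z h0 h1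
    simpa using P.adj_sub e

/-- Three-connectivity, in terms of separations. -/
def TCp (G : SimpleGraph V) : Prop :=
  ∀ (X T : Finset V) (x z : V), T.card ≤ 2 → x ∈ X → x ∉ T → z ∉ X → z ∉ T →
    (∀ x ∈ X, ∀ y, G.Adj x y → y ∈ X ∨ y ∈ T) → False

/-- Bicriticality. -/
def BIp (G : SimpleGraph V) : Prop :=
  ∀ (s0 s1 : V), s0 ≠ s1 → ∃ M, MF G s0 s1 M

lemma tcp_of {G : SimpleGraph V} (h : IsThreeConnected G) : TCp G := by
  intro X T x z hT hx hxT hz hzT hcl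
  have hc := h.2 (T : Set V) (by simpa [Set.ncard_coe_finset] using hT)
  obtain ⟨p⟩ := hc.preconnected ⟨x, by simpa using hxT⟩ ⟨z, by simpa using hzT⟩
  have : ∀ (a b : ((T : Set V)ᶜ : Set V)), ((G.induce (T : Set V)ᶜ).Walk a b) →
      (a : V) ∈ X → (b : V) ∈ X := by
    intro a b p
    induction p with
    | nil => exact id
    | @cons a b c hab p ih =>
      intro ha
      apply ih
      have hab' : G.Adj a b := by simpa using hab
      rcases hcl a ha b hab' with h | h
      · exact h
      · exact absurd (Finset.mem_coe.2 h) b.2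
  exact hz (this _ _ p hx)

lemma bip_of {G : SimpleGraph V} (h : IsBrick G) : BIp G :=
  fun s0 s1 hs => exists_MF G s0 s1 (h.2 s0 s1 hs)

lemma even_card {G : SimpleGraph V} (h : IsBrick G) : Even (Fintype.card V) := by
  have h4 := h.1.1
  have : 1 < Fintype.card V := by omega
  obtain ⟨a, b, hab⟩ := Fintype.exists_pair_of_one_lt_card this
  obtain ⟨M, hM, -⟩ := bip_of h a b hab
  have := even_of_invol (Finset.univ \ {a, b}) M (by
    intro z hz; simp at hz ⊢; push Not at hz; have := hM z hz.1 hz.2; exact ⟨this.1, this.2.1⟩)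
    (by intro z hz; simp at hz; push Not at hz; exact (hM z hz.1 hz.2).2.2.2)
    (by intro z hz; simp at hz; push Not at hz; exact (hM z hz.1 hz.2).2.2.1)
  rw [Finset.card_sdiff_of_subset (by simp), Finset.card_pair hab, Finset.card_univ] at this
  rw [Nat.even_sub (by omega)] at this
  simpa using this

lemma BI {G : SimpleGraph V} (hB : BIp G) {ι : Type*} (T : Finset V) (J : Finset ι)
    (f : ι → Finset V) (h2 : 2 ≤ T.card)
    (hodd : ∀ j ∈ J, Odd (f j).card) (hd : ∀ j ∈ J, ∀ x ∈ f j, x ∉ T)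
    (hdd : ∀ i ∈ J, ∀ j ∈ J, ∀ x ∈ f i, x ∈ f j → i = j)
    (hsep : ∀ j ∈ J, ∀ x ∈ f j, ∀ y, G.Adj x y → y ∈ f j ∨ y ∈ T) : J.card + 2 ≤ T.card := by
  obtain ⟨s0, h0, s1, h1, hs⟩ := Finset.one_lt_card.1 h2
  obtain ⟨M, hM1, hM2⟩ := hB s0 s1 hs
  refine match_count M s0 s1 hs hM1 T h0 h1 J f hodd
    (fun j hj => Finset.disjoint_left.2 (hd j hj)) ?_ ?_
  · intro i hi j hj hij
    exact Finset.disjoint_left.2 fun x hx hx' => hij (hdd i hi j hj x hx hx')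
  · intro j hj x hx
    apply hsep j hj x hx
    have := hd j hj x hx
    apply hM2 <;> rintro rfl <;> contradiction

lemma BI' {G : SimpleGraph V} (hB : BIp G) (hT : TCp G) {ι : Type*} (T : Finset V) (J : Finset ι)
    (f : ι → Finset V) (z : V) (hzT : z ∉ T) (hz : ∀ j ∈ J, z ∉ f j)
    (hodd : ∀ j ∈ J, Odd (f j).card) (hd : ∀ j ∈ J, ∀ x ∈ f j, x ∉ T)
    (hdd : ∀ i ∈ J, ∀ j ∈ J, ∀ x ∈ f i, x ∈ f j → i = j)
    (hsep : ∀ j ∈ J, ∀ x ∈ f j, ∀ y, G.Adj x y → y ∈ f j ∨ y ∈ T) : J.card ≤ T.card - 2 := by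
  by_cases h2 : 2 ≤ T.card
  · have := BI hB T J f h2 hodd hd hdd hsep
    omega
  · rcases J.eq_empty_or_nonempty with rfl | ⟨j, hj⟩
    · simp
    · exfalso
      obtain ⟨x, hx⟩ := Finset.card_pos.1 (hodd j hj).pos
      exact hT (f j) T x z (by omega) hx (hd j hj x hx) (hz j hj) hzT (hsep j hj)

/-- barrier of `G - uv` -/
def Bar1 (G : SimpleGraph V) (u v : V) (T : Finset V) : Prop :=
  2 ≤ T.card ∧ ∃ J : Finset (Finset V), T.card ≤ J.card ∧ (∀ P ∈ J, Odd P.card) ∧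
    (∀ P ∈ J, ∀ x ∈ P, x ∉ T) ∧ (∀ P ∈ J, ∀ Q ∈ J, ∀ x ∈ P, x ∈ Q → P = Q) ∧
    (∀ P ∈ J, ∀ x ∈ P, ∀ y, G.Adj x y → s(x, y) ≠ s(u, v) → y ∈ P ∨ y ∈ T)

lemma Bar1_of {G : SimpleGraph V} (hev : Even (Fintype.card V)) {ι : Type*} {u v : V}
    (T : Finset V) (h2 : 2 ≤ T.card)
    (J : Finset ι) (f : ι → Finset V) (hJ : T.card ≤ J.card + 1)
    (hodd : ∀ j ∈ J, Odd (f j).card) (hd : ∀ j ∈ J, ∀ x ∈ f j, x ∉ T)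
    (hdd : ∀ i ∈ J, ∀ j ∈ J, ∀ x ∈ f i, x ∈ f j → i = j)
    (hsep : ∀ j ∈ J, ∀ x ∈ f j, ∀ y, G.Adj x y → s(x, y) ≠ s(u, v) → y ∈ f j ∨ y ∈ T) :
    Bar1 G u v T := by
  classical
  have hinj : Set.InjOn f (J : Set ι) := by
    intro i hi j hj hij
    obtain ⟨x, hx⟩ := Finset.card_pos.1 (hodd i hi).pos
    exact hdd i hi j hj x hx (hij ▸ hx)
  have hcard : (J.image f).card = J.card := Finset.card_image_of_injOn hinj
  refine ⟨h2, ?_⟩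
  by_cases hle : T.card ≤ J.card
  · refine ⟨J.image f, by omega, ?_, ?_, ?_, ?_⟩ <;> simp only [Finset.forall_mem_image]
    · exact hodd
    · exact hd
    · intro i hi j hj x hx hx'; rw [hdd i hi j hj x hx hx']
    · exact hsep
  · have hTJ : T.card = J.card + 1 := by omega
    set U := J.biUnion f with hU
    set R := Finset.univ \ (T ∪ U) with hR
    have hUc : U.card = ∑ j ∈ J, (f j).card := by
      apply Finset.card_biUnion
      intro i hi j hj hij
      exact Finset.disjoint_left.2 fun x hx hx' => hij (hdd i hi j hj x hx hx')
    have hpar : Even (U.card + J.card) := by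
      rw [hUc, Finset.card_eq_sum_ones, ← Finset.sum_add_distrib]
      apply Finset.even_sum
      intro j hj
      exact (hodd j hj).add_odd odd_one
    have hTU : (T ∪ U).card = T.card + U.card := by
      apply Finset.card_union_of_disjoint
      rw [Finset.disjoint_right]
      intro x hx
      obtain ⟨j, hj, hx⟩ := Finset.mem_biUnion.1 hx
      exact hd j hj x hx
    have hRc : R.card + (T ∪ U).card = Fintype.card V := by
      rw [hR, Finset.card_sdiff_add_card_eq_card (Finset.subset_univ _), Finset.card_univ]
    have hRodd : Odd R.card := by
      rcases hev with ⟨a, ha⟩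
      rcases hpar with ⟨b, hb⟩
      rw [Nat.odd_iff]
      omega
    have hRm : ∀ x, x ∈ R ↔ x ∉ T ∧ ∀ j ∈ J, x ∉ f j := by
      intro x; simp [hR, hU]
    have hRn : R ∉ J.image f := by
      intro h
      obtain ⟨j, hj, hjR⟩ := Finset.mem_image.1 h
      obtain ⟨x, hx⟩ := Finset.card_pos.1 hRodd.pos
      exact ((hRm x).1 hx).2 j hj (hjR ▸ hx)
    refine ⟨insert R (J.image f), by rw [Finset.card_insert_of_notMem hRn]; omega, ?_, ?_, ?_, ?_⟩
      <;> simp only [Finset.forall_mem_image, Finset.forall_mem_insert]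
    · exact ⟨hRodd, hodd⟩
    · exact ⟨fun x hx => ((hRm x).1 hx).1, hd⟩
    · refine ⟨⟨fun _ _ _ => trivial, fun j hj x hx hx' => absurd hx' (((hRm x).1 hx).2 j hj)⟩, 
        fun i hi => ⟨fun x hx hx' => absurd hx (((hRm x).1 hx').2 i hi), ?_⟩⟩
      intro j hj x hx hx'; rw [hdd i hi j hj x hx hx']
    · refine ⟨?_, hsep⟩
      intro x hx y hxy hne
      rw [or_iff_not_imp_right]
      intro hy
      rw [hRm]
      refine ⟨hy, fun j hj hyj => ?_⟩
      rcases hsep j hj y hyj x hxy.symm (by rwa [Sym2.eq_swap]) with h | h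
      · exact ((hRm x).1 hx).2 j hj h
      · exact ((hRm x).1 hx).1 h

/-- factor-critical type property of the subgraph induced by `K` -/
def FC (G : SimpleGraph V) (K : Finset V) : Prop :=
  ∀ (T0 : Finset V) (J : Finset (Finset V)) (f : Finset V → Finset V),
    T0 ⊆ K → T0.Nonempty →
    (∀ j ∈ J, Odd (f j).card) → (∀ j ∈ J, ∀ x ∈ f j, x ∈ K ∧ x ∉ T0) →
    (∀ i ∈ J, ∀ j ∈ J, ∀ x ∈ f i, x ∈ f j → i = j) →
    (∀ j ∈ J, ∀ x ∈ f j, ∀ y ∈ K, G.Adj x y → y ∈ f j ∨ y ∈ T0) → J.card + 1 ≤ T0.card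

lemma FC_bridge {G : SimpleGraph V} {K X : Finset V} (hFC : FC G K) (hK : Odd K.card)
    (hX : X ⊆ K) (p q : V) (hp : p ∈ X)
    (he : ∀ x ∈ X, ∀ y ∈ K, y ∉ X → G.Adj x y → x = p ∧ y = q) : K ⊆ X := by
  by_contra hcon
  obtain ⟨q', hq'K, hq'X, he'⟩ : ∃ q', q' ∈ K ∧ q' ∉ X ∧
      ∀ x ∈ X, ∀ y ∈ K, y ∉ X → G.Adj x y → x = p ∧ y = q' := by
    by_cases hq : q ∈ K ∧ q ∉ X
    · exact ⟨q, hq.1, hq.2, he⟩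
    · obtain ⟨q', h1, h2⟩ := Finset.not_subset.1 hcon
      refine ⟨q', h1, h2, ?_⟩
      intro x hx y hy hyX hxy
      obtain ⟨-, rfl⟩ := he x hx y hy hyX hxy
      exact absurd ⟨hy, hyX⟩ hq
  have hsum : (K \ X).card + X.card = K.card := Finset.card_sdiff_add_card_eq_card hX
  have main : ∀ (Y Z : Finset V) (c : V), Odd Y.card → Odd Z.card → Y ⊆ K → Z ⊆ K → c ∈ K →
      c ∉ Y → c ∉ Z → (∀ x ∈ Y, x ∉ Z) →
      (∀ x ∈ Y, ∀ y ∈ K, G.Adj x y → y ∈ Y ∨ y = c) →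
      (∀ x ∈ Z, ∀ y ∈ K, G.Adj x y → y ∈ Z ∨ y = c) → False := by
    intro Y Z c hY hZ hYK hZK hcK hcY hcZ hYZ h1 h2
    have hne : Y ≠ Z := by
      rintro rfl
      obtain ⟨x, hx⟩ := Finset.card_pos.1 hY.pos
      exact hYZ x hx hx
    have := hFC {c} {Y, Z} id (by simpa using hcK) (by simp) (by simp [hY, hZ])
      (by simp only [Finset.mem_insert, Finset.mem_singleton]; grind)
      (by simp only [Finset.mem_insert, Finset.mem_singleton]; grind)
      (by simp only [Finset.mem_insert, Finset.mem_singleton]; grind)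
    rw [Finset.card_pair hne] at this
    simp at this
  rcases Nat.even_or_odd X.card with hXe | hXo
  · refine main (X.erase p) (K \ X) p ?_ ?_ ?_ ?_ (hX hp) ?_ ?_ ?_ ?_ ?_
    · rw [Finset.card_erase_of_mem hp]
      have := Finset.card_pos.2 ⟨p, hp⟩
      rw [Nat.odd_iff]; rcases hXe with ⟨k, hk⟩; omega
    · rw [Nat.odd_iff] at *; rcases hXe with ⟨k, hk⟩; omega
    · grind
    · grind
    · grind
    · grind
    · grind
    · intro x hx y hy hxy; grind
    · intro x hx y hy hxy
      have := hxy.symm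
      grind
  · refine main X ((K \ X).erase q') q' hXo ?_ hX ?_ hq'K hq'X ?_ ?_ ?_ ?_
    · have hm : q' ∈ K \ X := by simp [hq'K, hq'X]
      rw [Finset.card_erase_of_mem hm]
      have := Finset.card_pos.2 ⟨_, hm⟩
      rw [Nat.odd_iff] at *; omega
    · grind
    · grind
    · grind
    · intro x hx y hy hxy; grind
    · intro x hx y hy hxy
      have := hxy.symm
      grind

structure Str (G : SimpleGraph V) (u v : V) (S A B : Finset V) (PP : Finset (Finset V)) :
    Prop where
  mA : A ∈ PP
  mB : B ∈ PP
  nAB : A ≠ B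
  hu : u ∈ A
  hv : v ∈ B
  dj : ∀ P ∈ PP, ∀ Q ∈ PP, ∀ x ∈ P, x ∈ Q → P = Q
  dS : ∀ P ∈ PP, ∀ x ∈ P, x ∉ S
  cov : ∀ x, x ∉ S → ∃ P ∈ PP, x ∈ P
  edge : ∀ P ∈ PP, ∀ x ∈ P, ∀ y, G.Adj x y → y ∈ P ∨ y ∈ S ∨ (x = u ∧ y = v) ∨ (x = v ∧ y = u)
  card : S.card = PP.card
  conn : ∀ X : Finset V, v ∈ X → X ⊆ B → (∀ x ∈ X, ∀ y ∈ B, G.Adj x y → y ∈ X) → B ⊆ X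
  typ : (∀ P ∈ PP, Odd P.card ∧ (P ≠ B → FC G P)) ∨ PP = {A, B}

lemma Str.split {G : SimpleGraph V} {u v : V} {S A B : Finset V} {PP : Finset (Finset V)}
    (h : Str G u v S A B PP) (X : Finset V) :
    X.card = (S ∩ X).card + ∑ P ∈ PP, (P ∩ X).card := by
  have : X = (S ∩ X) ∪ PP.biUnion (fun P => P ∩ X) := by
    ext x
    simp only [Finset.mem_union, Finset.mem_inter, Finset.mem_biUnion]
    have := h.cov x
    grind
  conv_lhs => rw [this]
  rw [Finset.card_union_of_disjoint, Finset.card_biUnion]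
  · intro P hP Q hQ hPQ
    rw [Function.onFun, Finset.disjoint_left]
    intro x hx hx'
    exact hPQ (h.dj P hP Q hQ x (Finset.mem_inter.1 hx).1 (Finset.mem_inter.1 hx').1)
  · rw [Finset.disjoint_left]
    intro x hx hx'
    simp only [Finset.mem_inter, Finset.mem_biUnion] at hx hx'
    obtain ⟨P, hP, hxP, -⟩ := hx'
    exact h.dS P hP x hxP hx.1

/-- the crossing configuration -/
structure Cfg (G : SimpleGraph V) (u v w : V) (S A B S' A' B' : Finset V)
    (PP QQ : Finset (Finset V)) : Prop where
  bi : BIp G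
  tc : TCp G
  ev : Even (Fintype.card V)
  r : Str G u v S A B PP
  c : Str G u w S' A' B' QQ
  vw : v ≠ w
  uv : G.Adj u v
  uw : G.Adj u w
  deg : ∀ X : Finset V, (∀ y, G.Adj u y → y ∈ X) → 4 ≤ X.card
  sA : A.card ≤ B.card
  sA' : A'.card ≤ B.card
  big : ∀ T, Bar1 G u w T → (∀ x ∈ B, x ∉ T) → u ∉ T → False
  t1 : (S ∩ S').card ≤ 1 ∨ PP = {A, B} ∨ QQ = {A', B'}

section
variable {G : SimpleGraph V} {u v w : V} {S A B S' A' B' : Finset V}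
    {PP QQ : Finset (Finset V)}

lemma Cfg.basic (h : Cfg G u v w S A B S' A' B' PP QQ) :
    u ∈ A ∧ u ∉ B ∧ u ∉ S ∧ v ∈ B ∧ v ∉ A ∧ v ∉ S ∧ u ∈ A' ∧ u ∉ B' ∧ u ∉ S' ∧
    w ∈ B' ∧ w ∉ A' ∧ w ∉ S' ∧ (v ∈ A' ∨ v ∈ S') ∧ (w ∈ A ∨ w ∈ S) ∧ u ≠ v ∧ u ≠ w := by
  have r := h.r
  have c := h.c
  have h1 := r.edge A r.mA u r.hu w h.uw
  have h2 := c.edge A' c.mA u c.hu v h.uv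
  have := h.uv.ne
  have := h.uw.ne
  have h3 := h.vw
  have d1 := r.dj A r.mA B r.mB
  have d2 := c.dj A' c.mA B' c.mB
  have e1 := r.dS A r.mA
  have e2 := r.dS B r.mB
  have e3 := c.dS A' c.mA
  have e4 := c.dS B' c.mB
  have := r.hu
  have := r.hv
  have := c.hu
  have := c.hv
  have := r.nAB
  have := c.nAB
  grind

lemma Cfg.b1 (h : Cfg G u v w S A B S' A' B' PP QQ) : 1 ≤ (S' ∩ B).card := by
  by_contra hcon
  have h0 : ∀ x ∈ B, x ∉ S' := by
    intro x hx hx'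
    apply hcon
    exact Finset.card_pos.2 ⟨x, by simp [hx, hx']⟩
  have hb := h.basic
  have e := h.c.edge A' h.c.mA
  have hsub := h.r.conn (B ∩ A') (by grind) (by grind) (by
    intro x hx y hy hxy
    have := e x (by grind) y hxy
    grind)
  have : (insert u B).card ≤ A'.card := Finset.card_le_card (by grind)
  rw [Finset.card_insert_of_notMem hb.2.1] at this
  have := h.sA'
  omega

lemma Cfg.dj' (h : Cfg G u v w S A B S' A' B' PP QQ) :
   (∀ x ∈ A, x ∉ S) ∧ (∀ x ∈ B, x ∉ S) ∧ (∀ x ∈ A, x ∉ B) ∧ (∀ x ∈ A', x ∉ S') ∧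
   (∀ x ∈ B', x ∉ S') ∧ (∀ x ∈ A', x ∉ B') := by
  have r := h.r
  have c := h.c
  have d1 := r.dj A r.mA B r.mB
  have d2 := c.dj A' c.mA B' c.mB
  have e1 := r.dS A r.mA
  have e2 := r.dS B r.mB
  have e3 := c.dS A' c.mA
  have e4 := c.dS B' c.mB
  have := r.nAB
  have := c.nAB
  grind

lemma card_T (h : Cfg G u v w S A B S' A' B' PP QQ) (P : Finset V) (hP : ∀ x ∈ P, x ∉ S) :
    ((S' ∩ P) ∪ (S ∩ S')).card = (S' ∩ P).card + (S ∩ S').card := by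
  apply Finset.card_union_of_disjoint
  rw [Finset.disjoint_left]
  grind

lemma Cfg.E1 (h : Cfg G u v w S A B S' A' B' PP QQ) :
    2 ≤ (S' ∩ A).card + (S ∩ S').card + (S ∩ A').card := by
  by_contra hcon
  have hb := h.basic
  have hd := h.dj'
  set T1 := ((S' ∩ A) ∪ (S ∩ S')) ∪ (S ∩ A') with hT1
  have hc : T1.card ≤ 1 := by
    have := Finset.card_union_le ((S' ∩ A) ∪ (S ∩ S')) (S ∩ A')
    have := Finset.card_union_le (S' ∩ A) (S ∩ S')
    rw [hT1]
    omega
  have e1 := h.r.edge A h.r.mA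
  have e2 := h.c.edge A' h.c.mA
  have hX : ∀ x ∈ A, x ∈ A' → x = u := by
    by_contra hx
    push Not at hx
    obtain ⟨x, hxA, hxA', hxu⟩ := hx
    refine h.tc ((A ∩ A').erase u) (insert u T1) x v ?_ (by grind) (by grind) (by grind) (by grind) ?_
    · have := Finset.card_insert_le u T1
      omega
    · intro x hx y hxy
      have := e1 x (by grind) y hxy
      have := e2 x (by grind) y hxy
      grind
  have h4 := h.deg (insert v (insert w T1)) (by
    intro y hy
    have := e1 u hb.1 y hy
    have := e2 u (by grind) y hy
    have := hy.ne
    grind)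
  have := Finset.card_insert_le v (insert w T1)
  have := Finset.card_insert_le w T1
  omega

lemma Cfg.aA0 (h : Cfg G u v w S A B S' A' B' PP QQ) (hQ : QQ ≠ {A', B'})
    (h0 : (S ∩ A').card = 0) : A' ⊆ A := by
  have hb := h.basic
  have hd := h.dj'
  have ht := (h.c.typ.resolve_right hQ) A' h.c.mA
  have h0' : ∀ x ∈ A', x ∉ S := by
    rw [Finset.card_eq_zero] at h0
    intro x hx hx'
    have : x ∈ S ∩ A' := by simp [hx, hx']
    simp [h0] at this
  have e1 := h.r.edge A h.r.mA
  have := FC_bridge (X := A' ∩ A) (ht.2 h.c.nAB) ht.1 (by grind) u v (by grind) (by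
    intro x hx y hy hyX hxy
    have := e1 x (by grind) y hxy
    grind)
  grind

lemma Cfg.typ2 (h : Cfg G u v w S A B S' A' B' PP QQ) (hQ : QQ = {A', B'}) :
    1 ≤ (S ∩ A').card ∧ 1 ≤ (S ∩ B').card := by
  have hb := h.basic
  have hd := h.dj'
  have hS' : S'.card = 2 := by
    rw [h.c.card, hQ, Finset.card_pair h.c.nAB]
  have hb1 := h.b1
  have hle : (S' ∩ A).card + (S ∩ S').card + (S' ∩ B).card ≤ 2 := by
    rw [← hS', ← card_T h A hd.1, ← Finset.card_union_of_disjoint]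
    · apply Finset.card_le_card; grind
    · rw [Finset.disjoint_left]; grind
  have hE := h.E1
  refine ⟨by omega, ?_⟩
  by_contra hcon
  have h0' : ∀ x ∈ B', x ∉ S := by
    intro x hx hx'
    apply hcon
    exact Finset.card_pos.2 ⟨x, by simp [hx, hx']⟩
  have e1 := h.r.edge A h.r.mA
  have e2 := h.c.edge B' h.c.mB
  refine h.tc (A ∩ B') (insert u ((S' ∩ A) ∪ (S ∩ S'))) w v ?_ (by grind) (by grind) (by grind)
    (by grind) ?_
  · have := Finset.card_insert_le u ((S' ∩ A) ∪ (S ∩ S'))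
    have := card_T h A hd.1
    omega
  · intro x hx y hxy
    have := e1 x (by grind) y hxy
    have := e2 x (by grind) y hxy
    grind

lemma Cfg.nB (h : Cfg G u v w S A B S' A' B' PP QQ) :
    ((QQ.filter (fun P => (S ∩ P).card = 0)).filter (fun P => Odd (B ∩ P).card)).card ≤
      (S' ∩ B).card + (S ∩ S').card - 2 := by
  have hb := h.basic
  have hd := h.dj'
  rw [← card_T h B hd.2.1]
  have hmem : ∀ P ∈ (QQ.filter (fun P => (S ∩ P).card = 0)).filter (fun P => Odd (B ∩ P).card),
      P ∈ QQ ∧ P ≠ A' ∧ (∀ x ∈ P, x ∉ S) ∧ Odd (B ∩ P).card := by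
    intro P hP
    simp only [Finset.mem_filter] at hP
    obtain ⟨⟨h1, h2⟩, h3⟩ := hP
    refine ⟨h1, ?_, ?_, h3⟩
    · rintro rfl
      by_cases hQ : QQ = {P, B'}
      · have := h.typ2 hQ; omega
      · have := h.aA0 hQ h2
        have he : B ∩ P = ∅ := by
          ext x; simp only [Finset.mem_inter, Finset.notMem_empty, iff_false]; grind
        simp [he] at h3
    · rw [Finset.card_eq_zero] at h2
      intro x hx hx'
      have : x ∈ S ∩ P := by simp [hx, hx']
      simp [h2] at this
  refine BI' h.bi h.tc _ _ (fun P => B ∩ P) u (by grind) (by grind) ?_ ?_ ?_ ?_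
  · intro P hP; exact (hmem P hP).2.2.2
  · intro P hP x hx
    have := h.c.dS P (hmem P hP).1
    grind
  · intro P hP Q hQ x hx hx'
    exact h.c.dj P (hmem P hP).1 Q (hmem Q hQ).1 x (by grind) (by grind)
  · intro P hP x hx y hxy
    obtain ⟨h1, h2, h3, h4⟩ := hmem P hP
    have := h.r.edge B h.r.mB x (by grind) y hxy
    have := h.c.edge P h1 x (by grind) y hxy
    have := h.c.dj P h1 A' h.c.mA
    have := h.c.dS P h1
    grind
end

section
variable {G : SimpleGraph V} {u v w : V} {S A B S' A' B' : Finset V}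
    {PP QQ : Finset (Finset V)}

lemma Cfg.nA (h : Cfg G u v w S A B S' A' B' PP QQ) :
    ((QQ.filter (fun P => (S ∩ P).card = 0)).filter (fun P => Odd (A ∩ P).card)).card ≤
      (S' ∩ A).card + (S ∩ S').card - 1 := by
  have hb := h.basic
  have hd := h.dj'
  have hE := h.E1
  have hcT := card_T h A hd.1
  set J := (QQ.filter (fun P => (S ∩ P).card = 0)).filter (fun P => Odd (A ∩ P).card) with hJ
  set T := (S' ∩ A) ∪ (S ∩ S') with hT
  rw [← hcT]
  have hmem : ∀ P ∈ J, P ∈ QQ ∧ (S ∩ P).card = 0 ∧ (∀ x ∈ P, x ∉ S) ∧ Odd (A ∩ P).card := by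
    intro P hP
    simp only [hJ, Finset.mem_filter] at hP
    obtain ⟨⟨h1, h2⟩, h3⟩ := hP
    refine ⟨h1, h2, ?_, h3⟩
    rw [Finset.card_eq_zero] at h2
    intro x hx hx'
    have : x ∈ S ∩ P := by simp [hx, hx']
    simp [h2] at this
  have hcl : ∀ P ∈ J, P ≠ A' → ∀ x ∈ A ∩ P, ∀ y, G.Adj x y → y ∈ A ∩ P ∨ y ∈ T ∨
      (P = B' ∧ x = w ∧ y = u) := by
    intro P hP hPA x hx y hxy
    obtain ⟨h1, h2, h3, h4⟩ := hmem P hP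
    have := h.r.edge A h.r.mA x (by grind) y hxy
    have := h.c.edge P h1 x (by grind) y hxy
    have := h.c.dj P h1 A' h.c.mA
    have := h.c.dj P h1 B' h.c.mB
    have := h.c.dS P h1
    grind
  have hdT : ∀ P ∈ J, ∀ x ∈ A ∩ P, x ∉ T := by
    intro P hP x hx
    have := h.c.dS P (hmem P hP).1
    grind
  have hdd : ∀ P ∈ J, ∀ Q ∈ J, ∀ x ∈ A ∩ P, x ∈ A ∩ Q → P = Q := by
    intro P hP Q hQ x hx hx'
    exact h.c.dj P (hmem P hP).1 Q (hmem Q hQ).1 x (by grind) (by grind)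
  have h0 : ((J.erase A').erase B').card ≤ T.card - 2 := by
    refine BI' h.bi h.tc T _ (fun P => A ∩ P) v (by grind) (by grind) ?_ ?_ ?_ ?_
    · intro P hP; exact (hmem P (by grind)).2.2.2
    · intro P hP; exact hdT P (by grind)
    · intro P hP Q hQ; exact hdd P (by grind) Q (by grind)
    · intro P hP x hx y hxy
      have := hcl P (by grind) (by grind) x hx y hxy
      grind
  have h1 : J.card ≤ (J.erase A').card + 1 := by
    have := Finset.pred_card_le_card_erase (s := J) (a := A')
    omega
  have h2 : (J.erase A').card ≤ ((J.erase A').erase B').card + 1 := by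
    have := Finset.pred_card_le_card_erase (s := J.erase A') (a := B')
    omega
  by_cases hT2 : 2 ≤ T.card
  · by_contra hcon
    have hbar : Bar1 G u w T := by
      refine Bar1_of h.ev T hT2 (J.erase A') (fun P => A ∩ P) (by omega) ?_ ?_ ?_ ?_
      · intro P hP; exact (hmem P (by grind)).2.2.2
      · intro P hP; exact hdT P (by grind)
      · intro P hP Q hQ; exact hdd P (by grind) Q (by grind)
      · intro P hP x hx y hxy hne
        have := hcl P (by grind) (by grind) x hx y hxy
        rcases this with h | h | ⟨-, rfl, rfl⟩
        · exact Or.inl h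
        · exact Or.inr h
        · exact absurd Sym2.eq_swap hne
    exact h.big T hbar (by grind) (by grind)
  · have hA : A' ∉ J := by
      intro hA
      have := (hmem _ hA).2.1
      omega
    have hB : B' ∉ J := by
      intro hB
      obtain ⟨h1, h2, h3, h4⟩ := hmem B' hB
      obtain ⟨x, hx⟩ := Finset.card_pos.1 h4.pos
      refine h.tc (A ∩ B') (insert u T) x v ?_ hx ?_ (by grind) (by grind) ?_
      · have := Finset.card_insert_le u T
        omega
      · have := hdT B' hB x hx
        grind
      · intro x hx y hxy
        have := hcl B' hB h.c.nAB.symm x hx y hxy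
        grind
    rw [Finset.erase_eq_of_notMem hA, Finset.erase_eq_of_notMem hB] at h0
    omega

lemma Cfg.mP (h : Cfg G u v w S A B S' A' B' PP QQ) (P : Finset V) (hP : P ∈ QQ) :
    (((PP.erase A).erase B).filter (fun C => C ⊆ P)).card ≤
      (S ∩ P).card + (S ∩ S').card - 2 := by
  have hb := h.basic
  have hd := h.dj'
  by_cases hPP : PP = {A, B}
  · have : (PP.erase A).erase B = ∅ := by
      rw [hPP]; ext x; simp; tauto
    simp [this]
  have ht := h.r.typ.resolve_right hPP
  have hc : ((S ∩ P) ∪ (S ∩ S')).card = (S ∩ P).card + (S ∩ S').card := by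
    apply Finset.card_union_of_disjoint
    rw [Finset.disjoint_left]
    have := h.c.dS P hP
    grind
  rw [← hc]
  have hmem : ∀ C ∈ ((PP.erase A).erase B).filter (fun C => C ⊆ P), C ∈ PP ∧ C ≠ A ∧ C ≠ B ∧ 
      C ⊆ P := by
    intro C hC
    grind
  refine BI' h.bi h.tc _ _ id u (by grind) ?_ ?_ ?_ ?_ ?_
  · intro C hC hu
    obtain ⟨h1, h2, h3, h4⟩ := hmem C hC
    exact h2 (h.r.dj C h1 A h.r.mA u hu h.r.hu)
  · intro C hC; exact (ht C (hmem C hC).1).1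
  · intro C hC x hx
    have := h.r.dS C (hmem C hC).1 x hx
    grind
  · intro C hC D hD
    exact h.r.dj C (hmem C hC).1 D (hmem D hD).1
  · intro C hC x hx y hxy
    obtain ⟨h1, h2, h3, h4⟩ := hmem C hC
    have d1 := h.r.dj C h1 A h.r.mA
    have d2 := h.r.dj C h1 B h.r.mB
    have e1 := h.r.edge C h1 x hx y hxy
    have e2 := h.c.edge P hP x (h4 hx) y hxy
    simp only [id] at *
    grind

/-- a good component lies in one column -/
lemma Cfg.good (h : Cfg G u v w S A B S' A' B' PP QQ) (C : Finset V)
    (hC : C ∈ (PP.erase A).erase B) (hg : (S' ∩ C).card = 0) (x : V) (hx : x ∈ C)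
    (P : Finset V) (hP : P ∈ QQ) (hxP : x ∈ P) : C ⊆ P := by
  have hb := h.basic
  have hd := h.dj'
  have hC1 : C ∈ PP ∧ C ≠ A ∧ C ≠ B := by grind
  obtain ⟨h1, h2, h3⟩ := hC1
  have hPP : PP ≠ {A, B} := by
    intro hPP; rw [hPP] at h1; grind
  have ht := h.r.typ.resolve_right hPP C h1
  have hg' : ∀ x ∈ C, x ∉ S' := by
    rw [Finset.card_eq_zero] at hg
    intro x hx hx'
    have : x ∈ S' ∩ C := by simp [hx, hx']
    simp [hg] at this
  have d1 := h.r.dj C h1 A h.r.mA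
  have := FC_bridge (X := C ∩ P) (ht.2 h3) ht.1 (by grind) x x (by grind) (by
    intro x hx y hy hyX hxy
    have := h.c.edge P hP x (by grind) y hxy
    grind)
  grind

lemma Cfg.bad (h : Cfg G u v w S A B S' A' B' PP QQ) (C : Finset V)
    (hC : C ∈ (PP.erase A).erase B) (hg : (S' ∩ C).card ≠ 0) (N : Finset (Finset V))
    (hN : N ⊆ QQ) :
    (N.filter (fun P => Odd (C ∩ P).card)).card + 1 ≤ (S' ∩ C).card := by
  have hb := h.basic
  have hC1 : C ∈ PP ∧ C ≠ A ∧ C ≠ B := by grind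
  obtain ⟨h1, h2, h3⟩ := hC1
  have hPP : PP ≠ {A, B} := by
    intro hPP; rw [hPP] at h1; grind
  have ht := h.r.typ.resolve_right hPP C h1
  have d1 := h.r.dj C h1 A h.r.mA
  refine (ht.2 h3) (S' ∩ C) _ (fun P => C ∩ P) (by grind) (Finset.card_pos.1 (by omega)) ?_ ?_ ?_ ?_
  · intro P hP; exact (Finset.mem_filter.1 hP).2
  · intro P hP x hx
    have := h.c.dS P (hN (Finset.mem_filter.1 hP).1) x (by grind)
    grind
  · intro P hP Q hQ x hx hx'
    exact h.c.dj P (hN (Finset.mem_filter.1 hP).1) Q (hN (Finset.mem_filter.1 hQ).1) x (by grind)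
      (by grind)
  · intro P hP x hx y hy hxy
    have := h.c.edge P (hN (Finset.mem_filter.1 hP).1) x (by grind) y hxy
    grind

lemma Cfg.t1' (h : Cfg G u v w S A B S' A' B' PP QQ) (hPP : PP ≠ {A, B}) :
    (S ∩ S').card ≤ 1 := by
  rcases h.t1 with h1 | h1 | h1
  · exact h1
  · exact absurd h1 hPP
  · have hS' : S'.card = 2 := by
      rw [h.c.card, h1, Finset.card_pair h.c.nAB]
    have hd := h.dj'
    have hb1 := h.b1
    have hle := Finset.card_le_card (show (S' ∩ B) ∪ (S ∩ S') ⊆ S' by grind)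
    rw [card_T h B hd.2.1] at hle
    omega

lemma sum_erase2 (h : Cfg G u v w S A B S' A' B' PP QQ) (f : Finset V → ℕ) :
    ∑ P ∈ PP, f P = f A + f B + ∑ P ∈ (PP.erase A).erase B, f P := by
  rw [← Finset.add_sum_erase PP f h.r.mA, ← Finset.add_sum_erase (PP.erase A) f
    (Finset.mem_erase.2 ⟨h.r.nAB.symm, h.r.mB⟩)]
  ring

lemma Cfg.count1 (h : Cfg G u v w S A B S' A' B' PP QQ) :
    (S ∩ S').card + (S' ∩ A).card + (S' ∩ B).card +
      (((PP.erase A).erase B).filter (fun C => ¬ (S' ∩ C).card = 0)).card ≤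
    (QQ.filter (fun P => ¬ (S ∩ P).card = 0)).card +
    ((QQ.filter (fun P => (S ∩ P).card = 0)).filter (fun P => Odd (A ∩ P).card)).card +
    ((QQ.filter (fun P => (S ∩ P).card = 0)).filter (fun P => Odd (B ∩ P).card)).card := by
  set CC := (PP.erase A).erase B with hCC
  set N0 := QQ.filter (fun P => (S ∩ P).card = 0) with hN0
  set N1 := QQ.filter (fun P => ¬ (S ∩ P).card = 0) with hN1
  have hQ : N0.card + N1.card = QQ.card := Finset.card_filter_add_card_filter_not _
  have hS' : S'.card = (S ∩ S').card + ((S' ∩ A).card + (S' ∩ B).card + ∑ C ∈ CC, (S' ∩ C).card) := by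
    have h1 := h.r.split S'
    rw [sum_erase2 h] at h1
    rw [h1]
    simp only [Finset.inter_comm]
    rfl
  have hr : (CC.filter (fun C => ¬ (S' ∩ C).card = 0)).card =
      ∑ C ∈ CC, if ¬ (S' ∩ C).card = 0 then 1 else 0 := by
    rw [Finset.card_filter]
  have hcard := h.c.card
  by_cases hQQ : QQ = {A', B'}
  · have ht := h.typ2 hQQ
    have : N1.card = QQ.card := by
      congr 1
      rw [hN1, Finset.filter_eq_self]
      intro P hP
      rw [hQQ] at hP
      simp only [Finset.mem_insert, Finset.mem_singleton] at hP
      rcases hP with rfl | rfl <;> omega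
    have : (CC.filter (fun C => ¬ (S' ∩ C).card = 0)).card ≤ ∑ C ∈ CC, (S' ∩ C).card := by
      rw [hr]
      apply Finset.sum_le_sum
      intro C _
      split_ifs <;> omega
    omega
  · have hodd := h.c.typ.resolve_right hQQ
    have hcov : N0 ⊆ PP.biUnion (fun Q => N0.filter (fun P => Odd (Q ∩ P).card)) := by
      intro P hP
      have hP' := Finset.mem_filter.1 hP
      have h1 := h.r.split P
      rw [hP'.2, zero_add] at h1
      have h2 := (hodd P hP'.1).1
      rw [h1] at h2
      by_contra hcon
      simp only [Finset.mem_biUnion, Finset.mem_filter, not_exists, not_and, hP, true_and] at hcon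
      apply Nat.not_even_iff_odd.2 h2
      apply Finset.even_sum
      intro Q hQ
      exact Nat.not_odd_iff_even.1 (hcon Q hQ)
    have hle : N0.card ≤ ∑ Q ∈ PP, (N0.filter (fun P => Odd (Q ∩ P).card)).card :=
      (Finset.card_le_card hcov).trans Finset.card_biUnion_le
    rw [sum_erase2 h] at hle
    have hC : ∑ C ∈ CC, (N0.filter (fun P => Odd (C ∩ P).card)).card +
        (CC.filter (fun C => ¬ (S' ∩ C).card = 0)).card ≤ ∑ C ∈ CC, (S' ∩ C).card := by
      rw [hr, ← Finset.sum_add_distrib]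
      apply Finset.sum_le_sum
      intro C hC
      split_ifs with hg
      · have hPP : PP ≠ {A, B} := by
          intro hPP; rw [hCC, hPP] at hC; grind
        have ht1 := h.t1' hPP
        rw [add_zero, hg, Nat.le_zero, Finset.card_eq_zero, Finset.filter_eq_empty_iff]
        intro P hP hPo
        have hP' := Finset.mem_filter.1 hP
        obtain ⟨x, hx⟩ := Finset.card_pos.1 hPo.pos
        rw [Finset.mem_inter] at hx
        have hsub := h.good C hC hg x hx.1 P hP'.1 hx.2
        have hm := h.mP P hP'.1
        have : 0 < (((PP.erase A).erase B).filter (fun C => C ⊆ P)).card :=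
          Finset.card_pos.2 ⟨C, Finset.mem_filter.2 ⟨hC, hsub⟩⟩
        omega
      · exact h.bad C hC hg N0 (Finset.filter_subset _ _)
    change N0.card ≤ _ + _ + ∑ C ∈ CC, _ at hle
    omega

lemma Cfg.count2 (h : Cfg G u v w S A B S' A' B' PP QQ) :
    ∃ m : Finset V → ℕ, (∀ P ∈ QQ, m P ≤ (S ∩ P).card + (S ∩ S').card - 2) ∧
    (∀ P ∈ QQ, (S ∩ P).card ≠ 0 → m P + 1 ≤ (S ∩ P).card) ∧
    (QQ.filter (fun P => ¬ (S ∩ P).card = 0)).card +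
      ∑ P ∈ QQ.filter (fun P => ¬ (S ∩ P).card = 0), ((S ∩ P).card - m P - 1) +
      (S ∩ S').card ≤ (((PP.erase A).erase B).filter (fun C => ¬ (S' ∩ C).card = 0)).card + 2 := by
  set CC := (PP.erase A).erase B with hCC
  set N1 := QQ.filter (fun P => ¬ (S ∩ P).card = 0) with hN1
  set m : Finset V → ℕ := fun P => (CC.filter (fun C => C ⊆ P)).card with hm
  have hm1 : ∀ P ∈ QQ, m P ≤ (S ∩ P).card + (S ∩ S').card - 2 := fun P hP => h.mP P hP
  have hm3 : PP = {A, B} → ∀ P, m P = 0 := by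
    intro hPP P
    have : CC = ∅ := by
      rw [hCC, hPP]; ext x; simp; tauto
    simp [hm, this]
  have hm2 : ∀ P ∈ QQ, (S ∩ P).card ≠ 0 → m P + 1 ≤ (S ∩ P).card := by
    intro P hP h0
    by_cases hPP : PP = {A, B}
    · have := hm3 hPP P; omega
    · have := h.t1' hPP
      have := hm1 P hP
      omega
  have hm4 : ∀ P ∈ QQ, (S ∩ P).card = 0 → m P = 0 := by
    intro P hP h0
    by_cases hPP : PP = {A, B}
    · have := hm3 hPP P; omega
    · have := h.t1' hPP
      have := hm1 P hP
      omega
  refine ⟨m, hm1, hm2, ?_⟩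
  have hS : S.card = (S ∩ S').card + ∑ P ∈ QQ, (S ∩ P).card := by
    have h1 := h.c.split S
    rw [h1]
    simp only [Finset.inter_comm]
  have hSP := h.r.card
  have hPC : PP.card = CC.card + 2 := by
    have h1 := Finset.card_erase_add_one h.r.mA
    have h2 := Finset.card_erase_add_one (Finset.mem_erase.2 ⟨h.r.nAB.symm, h.r.mB⟩)
    rw [← hCC] at h2
    omega
  have hfil : (CC.filter (fun C => (S' ∩ C).card = 0)).card + 
      (CC.filter (fun C => ¬ (S' ∩ C).card = 0)).card = CC.card := 
    Finset.card_filter_add_card_filter_not _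
  have hg : (CC.filter (fun C => (S' ∩ C).card = 0)).card ≤ ∑ P ∈ QQ, m P := by
    have : CC.filter (fun C => (S' ∩ C).card = 0) ⊆ 
        QQ.biUnion (fun P => CC.filter (fun C => C ⊆ P)) := by
      intro C hC
      obtain ⟨hC, hg⟩ := Finset.mem_filter.1 hC
      have hPP : PP ≠ {A, B} := by
        intro hPP; rw [hCC, hPP] at hC; grind
      have ht := (h.r.typ.resolve_right hPP C (by grind)).1
      obtain ⟨x, hx⟩ := Finset.card_pos.1 ht.pos
      have hxS : x ∉ S' := by
        intro hxS
        rw [Finset.card_eq_zero] at hg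
        have : x ∈ S' ∩ C := by simp [hx, hxS]
        simp [hg] at this
      obtain ⟨P, hP, hxP⟩ := h.c.cov x hxS
      exact Finset.mem_biUnion.2 ⟨P, hP, Finset.mem_filter.2 ⟨hC, h.good C hC hg x hx P hP hxP⟩⟩
    exact (Finset.card_le_card this).trans Finset.card_biUnion_le
  have e1 : ∑ P ∈ QQ, (S ∩ P).card = ∑ P ∈ N1, (S ∩ P).card := by
    rw [hN1, Finset.sum_filter]
    apply Finset.sum_congr rfl
    intro P _
    split_ifs <;> omega
  have e2 : ∑ P ∈ QQ, m P = ∑ P ∈ N1, m P := by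
    rw [hN1, Finset.sum_filter]
    apply Finset.sum_congr rfl
    intro P hP
    have := hm4 P hP
    by_cases h : (S ∩ P).card = 0
    · simp [h, this h]
    · simp [h]
  have e3 : ∑ P ∈ N1, (S ∩ P).card = ∑ P ∈ N1, m P + N1.card + 
      ∑ P ∈ N1, ((S ∩ P).card - m P - 1) := by
    rw [Finset.card_eq_sum_ones, ← Finset.sum_add_distrib, ← Finset.sum_add_distrib]
    apply Finset.sum_congr rfl
    intro P hP
    have hP' := Finset.mem_filter.1 hP
    have := hm2 P hP'.1 hP'.2
    omega
  omega

theorem Cfg.false (h : Cfg G u v w S A B S' A' B' PP QQ) : False := by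
  have hb := h.basic
  have hd := h.dj'
  have hE := h.E1
  have hb1 := h.b1
  have hnA := h.nA
  have hnB := h.nB
  have hc1 := h.count1
  obtain ⟨m, hm1, hm2, hc2⟩ := h.count2
  set N1 := QQ.filter (fun P => ¬ (S ∩ P).card = 0) with hN1
  set D := ∑ P ∈ N1, ((S ∩ P).card - m P - 1) with hD
  have ht0 : (S ∩ S').card = 0 := by omega
  have hs : ∀ P ∈ QQ, 2 ≤ (S ∩ P).card → P ∈ N1 ∧ 1 ≤ (S ∩ P).card - m P - 1 := by
    intro P hP h2
    refine ⟨Finset.mem_filter.2 ⟨hP, by omega⟩, ?_⟩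
    have := hm1 P hP
    omega
  have hs1 : ∀ P ∈ QQ, 2 ≤ (S ∩ P).card → 1 ≤ D := by
    intro P hP h2
    have h3 := hs P hP h2
    exact h3.2.trans (Finset.single_le_sum (f := fun P => (S ∩ P).card - m P - 1)
      (fun _ _ => Nat.zero_le _) h3.1)
  have hs2 : ∀ P ∈ QQ, P ≠ A' → 2 ≤ (S ∩ P).card → 2 ≤ (S ∩ A').card → 2 ≤ D := by
    intro P hP hne h2 h2'
    have h3 := hs P hP h2
    have h4 := hs A' h.c.mA h2'
    have : ∑ P ∈ ({P, A'} : Finset (Finset V)), ((S ∩ P).card - m P - 1) ≤ D := by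
      apply Finset.sum_le_sum_of_subset
      intro Q hQ
      simp only [Finset.mem_insert, Finset.mem_singleton] at hQ
      rcases hQ with rfl | rfl
      · exact h3.1
      · exact h4.1
    rw [Finset.sum_pair hne] at this
    omega
  by_cases hb2 : 2 ≤ (S' ∩ B).card
  · have := hs1 A' h.c.mA (by omega)
    omega
  have hbe : (S' ∩ B).card = 1 := by omega
  have ha : ∀ P ∈ QQ, P ≠ A' → (S ∩ P).card ≤ 1 := by
    intro P hP hne
    by_contra hcon
    have h1 := hs1 P hP (by omega)
    have h2 := hs2 P hP hne (by omega)
    omega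
  have hSS : ∀ x ∈ S, x ∉ S' := by
    intro x hx hx'
    rw [Finset.card_eq_zero] at ht0
    have : x ∈ S ∩ S' := by simp [hx, hx']
    simp [ht0] at this
  obtain ⟨z, hz⟩ := Finset.card_eq_one.1 hbe
  have hz' : ∀ x, x ∈ S' ∧ x ∈ B ↔ x = z := by
    intro x; rw [← Finset.mem_inter, hz, Finset.mem_singleton]
  have hzB := (hz' z).2 rfl
  have hcell : ∀ x ∈ B, x ≠ z → x ∈ A' := by
    intro x hx hxz
    obtain ⟨P, hP, hxP⟩ := h.c.cov x (fun hx' => hxz ((hz' x).1 ⟨hx', hx⟩))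
    by_cases hPA : P = A'
    · exact hPA ▸ hxP
    exfalso
    have hdP := h.c.dS P hP
    have hdA := h.c.dj P hP A' h.c.mA
    refine h.tc (B ∩ P) (insert z (S ∩ P)) x u ?_ (by grind) (by grind) (by grind) (by grind) ?_
    · have := Finset.card_insert_le z (S ∩ P)
      have := ha P hP hPA
      omega
    · intro x hx y hxy
      have := h.r.edge B h.r.mB x (by grind) y hxy
      have := h.c.edge P hP x (by grind) y hxy
      have := hz' y
      grind
  have hsA' := h.sA'
  by_cases ha0 : (S ∩ A').card = 0
  · have hQQ : QQ ≠ {A', B'} := by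
      intro hQQ
      have := (h.typ2 hQQ).1
      omega
    have hsub := h.aA0 hQQ ha0
    have hBz : B ⊆ {z} := by
      intro x hx
      rw [Finset.mem_singleton]
      by_contra hxz
      exact hd.2.2.1 x (hsub (hcell x hx hxz)) hx
    have h1 : B.card ≤ 1 := (Finset.card_le_card hBz).trans (by simp)
    have h2 := h.sA
    have hA : (S' ∩ A).card = 0 := by
      rw [Finset.card_eq_zero]
      ext x
      simp only [Finset.mem_inter, Finset.notMem_empty, iff_false, not_and]
      intro hx hxA
      have := Finset.card_le_one.1 (h2.trans h1) x hxA u hb.1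
      grind
    omega
  · obtain ⟨s, hs⟩ := Finset.card_pos.1 (Nat.pos_of_ne_zero ha0)
    have hsub : insert s (insert u (B.erase z)) ⊆ A' := by
      intro x hx
      have := hcell x
      grind
    have h1 := Finset.card_le_card hsub
    rw [Finset.card_insert_of_notMem (by grind), Finset.card_insert_of_notMem (by grind),
      Finset.card_erase_of_mem hzB.2] at h1
    have := Finset.card_pos.2 ⟨z, hzB.2⟩
    omega
end

/-- the graph `G - uv - T` -/
def cut (G : SimpleGraph V) (u v : V) (T : Finset V) : SimpleGraph V where
  Adj x y := G.Adj x y ∧ s(x, y) ≠ s(u, v) ∧ x ∉ T ∧ y ∉ T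
  symm := ⟨fun x y h => ⟨h.1.symm, by rw [Sym2.eq_swap]; exact h.2.1, h.2.2.2, h.2.2.1⟩⟩
  loopless := ⟨fun x h => h.1.ne rfl⟩

open Classical in
/-- component of `x` in `G - uv - T` -/
noncomputable def comp (G : SimpleGraph V) (u v : V) (T : Finset V) (x : V) : Finset V :=
  Finset.univ.filter (fun y => (cut G u v T).Reachable x y)

section
variable {G : SimpleGraph V} {u v : V} {T : Finset V}

lemma mem_comp {x y : V} : y ∈ comp G u v T x ↔ (cut G u v T).Reachable x y := by
  simp [comp]

lemma self_comp (x : V) : x ∈ comp G u v T x := mem_comp.2 (SimpleGraph.Reachable.refl x)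

lemma comp_eq {x y : V} (h : y ∈ comp G u v T x) : comp G u v T x = comp G u v T y := by
  rw [mem_comp] at h
  ext z
  rw [mem_comp, mem_comp]
  exact ⟨fun h' => h.symm.trans h', fun h' => h.trans h'⟩

lemma comp_min {x : V} (X : V → Prop) (hx : X x)
    (hcl : ∀ z y, X z → G.Adj z y → s(z, y) ≠ s(u, v) → z ∉ T → y ∉ T → X y) :
    ∀ y ∈ comp G u v T x, X y := by
  intro y hy
  obtain ⟨p⟩ := mem_comp.1 hy
  clear hy
  induction p with
  | nil => exact hx
  | cons hab p ih => exact ih (hcl _ _ hx hab.1 hab.2.1 hab.2.2.1 hab.2.2.2)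

lemma comp_notT {x : V} (hx : x ∉ T) : ∀ y ∈ comp G u v T x, y ∉ T :=
  comp_min (fun y => y ∉ T) hx (fun _ _ _ _ _ _ h => h)

lemma comp_cl {x : V} (hx : x ∉ T) {z y : V} (hz : z ∈ comp G u v T x) (hzy : G.Adj z y)
    (hne : s(z, y) ≠ s(u, v)) : y ∈ comp G u v T x ∨ y ∈ T := by
  by_cases hy : y ∈ T
  · exact Or.inr hy
  · left
    have h1 := comp_notT hx z hz
    rw [mem_comp] at hz ⊢
    exact hz.trans (SimpleGraph.Adj.reachable ⟨hzy, hne, h1, hy⟩)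

/-- all components -/
noncomputable def comps (G : SimpleGraph V) (u v : V) (T : Finset V) : Finset (Finset V) :=
  (Finset.univ \ T).image (comp G u v T)

lemma mem_comps {K : Finset V} : K ∈ comps G u v T ↔ ∃ x, x ∉ T ∧ comp G u v T x = K := by
  simp [comps]

lemma comps_dj : ∀ P ∈ comps G u v T, ∀ Q ∈ comps G u v T, ∀ x ∈ P, x ∈ Q → P = Q := by
  intro P hP Q hQ x hx hx'
  obtain ⟨p, -, rfl⟩ := mem_comps.1 hP
  obtain ⟨q, -, rfl⟩ := mem_comps.1 hQ
  rw [comp_eq hx, comp_eq hx']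

lemma comps_T : ∀ P ∈ comps G u v T, ∀ x ∈ P, x ∉ T := by
  intro P hP
  obtain ⟨p, hp, rfl⟩ := mem_comps.1 hP
  exact comp_notT hp

lemma comps_cl : ∀ P ∈ comps G u v T, ∀ x ∈ P, ∀ y, G.Adj x y → s(x, y) ≠ s(u, v) →
    y ∈ P ∨ y ∈ T := by
  intro P hP x hx y hxy hne
  obtain ⟨p, hp, rfl⟩ := mem_comps.1 hP
  exact comp_cl hp hx hxy hne

lemma comps_eq {P : Finset V} (hP : P ∈ comps G u v T) {x : V} (hx : x ∈ P) :
    P = comp G u v T x := by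
  obtain ⟨p, hp, rfl⟩ := mem_comps.1 hP
  exact comp_eq hx

lemma comp_antitone {T' : Finset V} (h : T ⊆ T') (x : V) :
    comp G u v T' x ⊆ comp G u v T x := by
  by_cases hx : x ∈ T'
  · intro y hy
    have : y = x := comp_min (T := T') (fun y => y = x) rfl
      (by rintro z y rfl _ _ h; exact absurd hx h) y hy
    rw [this]; exact self_comp x
  · intro y hy
    refine comp_min (T := T') (fun y => y ∈ comp G u v T x) (self_comp x) ?_ y hy
    intro z y hz hzy hne _ hy
    rcases comp_cl (fun h' => hx (h h')) hz hzy hne with h1 | h1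
    · exact h1
    · exact absurd (h h1) hy

lemma comp_grow {T' : Finset V} (x : V) (hx : x ∉ T) (hB : ∀ y ∈ comp G u v T x, y ∉ T') :
    comp G u v T x ⊆ comp G u v T' x := by
  intro y hy
  refine (comp_min (T := T) (fun y => y ∈ comp G u v T x ∧ y ∈ comp G u v T' x)
    ⟨self_comp x, self_comp x⟩ ?_ y hy).2
  rintro z y ⟨hz, hz'⟩ hzy hne _ hy
  have h1 := (comp_cl hx hz hzy hne).resolve_right hy
  exact ⟨h1, (comp_cl (hB x (self_comp x)) hz' hzy hne).resolve_right (hB y h1)⟩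

open Classical in
lemma odd_comps_card (J : Finset (Finset V)) (hodd : ∀ P ∈ J, Odd P.card)
    (hd : ∀ P ∈ J, ∀ x ∈ P, x ∉ T) (hdd : ∀ P ∈ J, ∀ Q ∈ J, ∀ x ∈ P, x ∈ Q → P = Q)
    (hsep : ∀ P ∈ J, ∀ x ∈ P, ∀ y, G.Adj x y → s(x, y) ≠ s(u, v) → y ∈ P ∨ y ∈ T) :
    J.card ≤ ((comps G u v T).filter (fun K => Odd K.card)).card := by
  have hsub : ∀ P ∈ J, ∀ x ∈ P, comp G u v T x ⊆ P := by
    intro P hP x hx y hy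
    refine comp_min (fun y => y ∈ P) hx ?_ y hy
    intro z y hz hzy hne _ hy
    exact (hsep P hP z hz y hzy hne).resolve_right hy
  have key : ∀ P ∈ J, ∃ K ∈ (comps G u v T).filter (fun K => Odd K.card), K ⊆ P := by
    intro P hP
    by_contra hcon
    push Not at hcon
    have hPe : P = ((comps G u v T).filter (fun K => K ⊆ P)).biUnion id := by
      ext x
      simp only [Finset.mem_biUnion, Finset.mem_filter, id]
      constructor
      · intro hx
        exact ⟨comp G u v T x, ⟨mem_comps.2 ⟨x, hd P hP x hx, rfl⟩, hsub P hP x hx⟩, self_comp x⟩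
      · rintro ⟨K, ⟨-, hK⟩, hx⟩
        exact hK hx
    have hc : P.card = ∑ K ∈ (comps G u v T).filter (fun K => K ⊆ P), K.card := by
      conv_lhs => rw [hPe]
      apply Finset.card_biUnion
      intro K hK L hL hKL
      rw [Function.onFun, Finset.disjoint_left]
      intro x hx hx'
      exact hKL (comps_dj K (Finset.mem_filter.1 hK).1 L (Finset.mem_filter.1 hL).1 x hx hx')
    have : Even P.card := by
      rw [hc]
      apply Finset.even_sum
      intro K hK
      rw [← Nat.not_odd_iff_even]
      intro ho
      rw [Finset.mem_filter] at hK
      exact hcon K (Finset.mem_filter.2 ⟨hK.1, ho⟩) hK.2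
    exact Nat.not_even_iff_odd.2 (hodd P hP) this
  choose! g hg1 hg2 using key
  apply Finset.card_le_card_of_injOn g (fun P hP => hg1 P hP)
  intro P hP Q hQ hPQ
  obtain ⟨x, hx⟩ := Finset.card_pos.1 (Finset.mem_filter.1 (hg1 P hP)).2.pos
  exact hdd P hP Q hQ x (hg2 P hP hx) (hg2 Q hQ (hPQ ▸ hx))

lemma build1 (hB : BIp G) (hev : Even (Fintype.card V)) (huv : G.Adj u v) (hT : Bar1 G u v T)
    (hmax : ∀ T2, T ⊆ T2 → Bar1 G u v T2 → (∀ x ∈ comp G u v T v, x ∉ T2) → T2 = T) :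
    Str G u v T (comp G u v T u) (comp G u v T v) (comps G u v T) := by
  classical
  obtain ⟨h2, J, hJ, hJ1, hJ2, hJ3, hJ4⟩ := hT
  have hO := odd_comps_card J hJ1 hJ2 hJ3 hJ4
  set O := (comps G u v T).filter (fun K => Odd K.card) with hOdef
  set A := comp G u v T u with hA
  set B := comp G u v T v with hBd
  have hOm : ∀ K ∈ O, K ∈ comps G u v T ∧ Odd K.card := fun K hK => Finset.mem_filter.1 hK
  have hs2 : ∀ x y : V, s(x, y) = s(u, v) → (x = u ∧ y = v) ∨ (x = v ∧ y = u) := by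
    intro x y h; simpa using h
  have huT : u ∉ T ∧ v ∉ T := by
    by_contra hcon
    have : O.card + 2 ≤ T.card := by
      refine BI hB T O id h2 (fun K hK => (hOm K hK).2) (fun K hK => comps_T K (hOm K hK).1)
        (fun K hK L hL => comps_dj K (hOm K hK).1 L (hOm L hL).1) ?_
      intro K hK x hx y hxy
      by_cases hne : s(x, y) = s(u, v)
      · have := comps_T K (hOm K hK).1 x hx
        rcases hs2 x y hne with ⟨rfl, rfl⟩ | ⟨rfl, rfl⟩
        · right; tauto
        · right; tauto
      · exact comps_cl K (hOm K hK).1 x hx y hxy hne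
    omega
  obtain ⟨huT, hvT⟩ := huT
  have h0 : ((O.erase A).erase B).card + 2 ≤ T.card := by
    have hm : ∀ K ∈ (O.erase A).erase B, K ∈ O ∧ K ≠ A ∧ K ≠ B := by
      intro K hK; simp only [Finset.mem_erase] at hK; tauto
    refine BI hB T _ id h2 (fun K hK => (hOm K (hm K hK).1).2)
        (fun K hK => comps_T K (hOm K (hm K hK).1).1)
        (fun K hK L hL => comps_dj K (hOm K (hm K hK).1).1 L (hOm L (hm L hL).1).1) ?_
    intro K hK x hx y hxy
    obtain ⟨h3, h4, h5⟩ := hm K hK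
    by_cases hne : s(x, y) = s(u, v)
    · rcases hs2 x y hne with ⟨rfl, rfl⟩ | ⟨rfl, rfl⟩
      · exact absurd (comps_eq (hOm K h3).1 hx) h4
      · exact absurd (comps_eq (hOm K h3).1 hx) h5
    · exact comps_cl K (hOm K h3).1 x hx y hxy hne
  have h1 := Finset.pred_card_le_card_erase (s := O) (a := A)
  have h1' := Finset.pred_card_le_card_erase (s := O.erase A) (a := B)
  have hAO : A ∈ O := by
    by_contra hcon
    rw [Finset.erase_eq_of_notMem hcon] at *
    omega
  have hBO' : B ∈ O.erase A := by
    by_contra hcon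
    rw [Finset.erase_eq_of_notMem hcon] at *
    omega
  obtain ⟨hBA, hBO⟩ := Finset.mem_erase.1 hBO'
  have hOT : O.card = T.card := by omega
  have hall : ∀ K ∈ comps G u v T, K ∈ O := by
    intro K hK
    by_contra hKO
    have hKB : K ≠ B := by rintro rfl; exact hKO hBO
    obtain ⟨x, hxT, hxK⟩ := mem_comps.1 hK
    have hxK' : x ∈ K := hxK ▸ self_comp x
    have hbar : Bar1 G u v (insert x T) := by
      refine Bar1_of hev _ ?_ O id ?_ (fun K hK => (hOm K hK).2) ?_
        (fun K hK L hL => comps_dj K (hOm K hK).1 L (hOm L hL).1) ?_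
      · rw [Finset.card_insert_of_notMem hxT]; omega
      · rw [Finset.card_insert_of_notMem hxT]; omega
      · intro L hL y hy
        rw [Finset.mem_insert, not_or]
        refine ⟨?_, comps_T L (hOm L hL).1 y hy⟩
        rintro rfl
        exact hKO (comps_dj K hK L (hOm L hL).1 y hxK' hy ▸ hL)
      · intro L hL y hy z hyz hne
        rcases comps_cl L (hOm L hL).1 y hy z hyz hne with h | h
        · exact Or.inl h
        · exact Or.inr (Finset.mem_insert_of_mem h)
    have := hmax _ (Finset.subset_insert x T) hbar (by
      intro y hy
      rw [Finset.mem_insert, not_or]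
      refine ⟨?_, comp_notT hvT y hy⟩
      rintro rfl
      exact hKB (comps_dj K hK B (hOm B hBO).1 y hxK' hy))
    exact hxT (this ▸ Finset.mem_insert_self x T)
  have hOe : O = comps G u v T := Finset.Subset.antisymm (Finset.filter_subset _ _) hall
  refine ⟨(hOm A hAO).1, (hOm B hBO).1, hBA.symm, self_comp u, self_comp v, comps_dj, comps_T,
    ?_, ?_, ?_, ?_, ?_⟩
  · intro x hx
    exact ⟨_, mem_comps.2 ⟨x, hx, rfl⟩, self_comp x⟩
  · intro P hP x hx y hxy
    by_cases hne : s(x, y) = s(u, v)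
    · exact Or.inr (Or.inr (hs2 x y hne))
    · rcases comps_cl P hP x hx y hxy hne with h | h
      · exact Or.inl h
      · exact Or.inr (Or.inl h)
  · rw [← hOT, hOe]
  · intro X hvX hXB hX y hy
    refine comp_min (fun y => y ∈ X) hvX ?_ y hy
    intro z y hz hzy hne _ hyT
    exact hX z hz y ((comp_cl hvT (hXB hz) hzy hne).resolve_right hyT) hzy
  · left
    intro K hK
    refine ⟨(hOm K (hall K hK)).2, ?_⟩
    intro hKB T0 J f hT0 hT0n hodd hin hdd hsep
    by_contra hcon
    have hTT : (T ∪ T0).card = T.card + T0.card := by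
      apply Finset.card_union_of_disjoint
      rw [Finset.disjoint_right]
      intro x hx
      exact comps_T K hK x (hT0 hx)
    have hbar : Bar1 G u v (T ∪ T0) := by
      refine Bar1_of hev _ (by omega) ((O.erase K).disjSum J) (Sum.elim id f) ?_ ?_ ?_ ?_ ?_
      · rw [Finset.card_disjSum, Finset.card_erase_of_mem (hall K hK), hTT]
        omega
      · rintro (L | j) hj
        · simp only [Finset.inl_mem_disjSum] at hj
          exact (hOm L (Finset.mem_of_mem_erase hj)).2
        · simp only [Finset.inr_mem_disjSum] at hj
          exact hodd j hj
      · rintro (L | j) hj x hx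
        · simp only [Finset.inl_mem_disjSum, Finset.mem_erase] at hj
          rw [Finset.mem_union, not_or]
          refine ⟨comps_T L (hOm L hj.2).1 x hx, fun hx' => hj.1 ?_⟩
          exact comps_dj L (hOm L hj.2).1 K hK x hx (hT0 hx')
        · simp only [Finset.inr_mem_disjSum] at hj
          rw [Finset.mem_union, not_or]
          exact ⟨comps_T K hK x (hin j hj x hx).1, (hin j hj x hx).2⟩
      · rintro (L | i) hi (L' | j) hj x hx hx'
        · simp only [Finset.inl_mem_disjSum, Finset.mem_erase] at hi hj
          rw [comps_dj L (hOm L hi.2).1 L' (hOm L' hj.2).1 x hx hx']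
        · simp only [Finset.inl_mem_disjSum, Finset.inr_mem_disjSum, Finset.mem_erase] at hi hj
          exact absurd (comps_dj L (hOm L hi.2).1 K hK x hx (hin j hj x hx').1) hi.1
        · simp only [Finset.inl_mem_disjSum, Finset.inr_mem_disjSum, Finset.mem_erase] at hi hj
          exact absurd (comps_dj L' (hOm L' hj.2).1 K hK x hx' (hin i hi x hx).1) hj.1
        · simp only [Finset.inr_mem_disjSum] at hi hj
          rw [hdd i hi j hj x hx hx']
      · rintro (L | j) hj x hx y hxy hne
        · simp only [Finset.inl_mem_disjSum, Finset.mem_erase] at hj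
          rcases comps_cl L (hOm L hj.2).1 x hx y hxy hne with h | h
          · exact Or.inl h
          · exact Or.inr (Finset.mem_union_left _ h)
        · simp only [Finset.inr_mem_disjSum] at hj
          rcases comps_cl K hK x (hin j hj x hx).1 y hxy hne with h | h
          · rcases hsep j hj x hx y h hxy with h' | h'
            · exact Or.inl h'
            · exact Or.inr (Finset.mem_union_right _ h')
          · exact Or.inr (Finset.mem_union_left _ h)
    have := hmax _ Finset.subset_union_left hbar (by
      intro y hy
      rw [Finset.mem_union, not_or]
      refine ⟨comp_notT hvT y hy, fun hy' => hKB ?_⟩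
      exact comps_dj K hK B (hOm B hBO).1 y (hT0 hy') hy)
    obtain ⟨x, hx⟩ := hT0n
    exact comps_T K hK x (hT0 hx) (this ▸ Finset.mem_union_right _ hx)

/-- 2-separations of `G - uv` -/
def Bar2 (G : SimpleGraph V) (u v : V) (T : Finset V) : Prop :=
  T.card = 2 ∧ u ∉ T ∧ v ∉ T ∧ v ∉ comp G u v T u

lemma build2 (hT3 : TCp G) (hT : Bar2 G u v T) :
    Str G u v T (comp G u v T u) (comp G u v T v) {comp G u v T u, comp G u v T v} := by
  obtain ⟨h2, hu, hv, hne⟩ := hT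
  have hAB : comp G u v T u ≠ comp G u v T v := by
    intro h; exact hne (h ▸ self_comp v)
  have hm : ∀ P ∈ ({comp G u v T u, comp G u v T v} : Finset (Finset V)), P ∈ comps G u v T := by
    intro P hP
    simp only [Finset.mem_insert, Finset.mem_singleton] at hP
    rcases hP with rfl | rfl
    · exact mem_comps.2 ⟨u, hu, rfl⟩
    · exact mem_comps.2 ⟨v, hv, rfl⟩
  have hs2 : ∀ x y : V, s(x, y) = s(u, v) → (x = u ∧ y = v) ∨ (x = v ∧ y = u) := by
    intro x y h; simpa using h
  refine ⟨by simp, by simp, hAB, self_comp u, self_comp v,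
    fun P hP Q hQ => comps_dj P (hm P hP) Q (hm Q hQ), fun P hP => comps_T P (hm P hP), ?_, ?_,
    ?_, ?_, Or.inr rfl⟩
  · intro x hx
    by_contra hcon
    simp only [Finset.mem_insert, Finset.mem_singleton, exists_eq_or_imp, exists_eq_left,
      not_or] at hcon
    have hxu : u ∉ comp G u v T x := fun h => hcon.1 (comp_eq h ▸ self_comp x)
    have hxv : v ∉ comp G u v T x := fun h => hcon.2 (comp_eq h ▸ self_comp x)
    refine hT3 (comp G u v T x) T x u (by omega) (self_comp x) hx hxu hu ?_
    intro z hz y hzy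
    refine comp_cl hx hz hzy ?_
    intro h
    rcases hs2 z y h with ⟨rfl, rfl⟩ | ⟨rfl, rfl⟩
    · exact hxu hz
    · exact hxv hz
  · intro P hP x hx y hxy
    by_cases hne : s(x, y) = s(u, v)
    · exact Or.inr (Or.inr (hs2 x y hne))
    · rcases comps_cl P (hm P hP) x hx y hxy hne with h | h
      · exact Or.inl h
      · exact Or.inr (Or.inl h)
  · rw [h2, Finset.card_pair hAB]
  · intro X hvX hXB hX y hy
    refine comp_min (fun y => y ∈ X) hvX ?_ y hy
    intro z y hz hzy hne _ hyT
    exact hX z hz y ((comp_cl hv (hXB hz) hzy hne).resolve_right hyT) hzy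

lemma t_le_one (hB : BIp G) {w : V} {S S' : Finset V} (h1 : Bar1 G u v S) (h2 : Bar1 G u w S')
    (hvw : v ≠ w) (huS : u ∉ S) : (S ∩ S').card ≤ 1 := by
  by_contra hcon
  obtain ⟨s0, h0, s1, h1', hs⟩ := Finset.one_lt_card.1 (not_le.1 hcon)
  rw [Finset.mem_inter] at h0 h1'
  obtain ⟨M, hM1, hM2⟩ := hB s0 s1 hs
  have hu0 : u ≠ s0 := fun h => huS (h ▸ h0.1)
  have hu1 : u ≠ s1 := fun h => huS (h ▸ h1'.1)
  have key : ∀ (v : V) (S : Finset V), Bar1 G u v S → s0 ∈ S → s1 ∈ S → M u = v := by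
    intro v S hS a0 a1
    by_contra hne
    obtain ⟨-, J, hJ, hJ1, hJ2, hJ3, hJ4⟩ := hS
    have := match_count M s0 s1 hs hM1 S a0 a1 J id hJ1
      (fun j hj => Finset.disjoint_left.2 (hJ2 j hj))
      (fun i hi j hj hij => Finset.disjoint_left.2 fun x hx hx' => hij (hJ3 i hi j hj x hx hx'))
      (by
        intro j hj x hx
        have hxS := hJ2 j hj x hx
        have hx0 : x ≠ s0 := fun h => hxS (h ▸ a0)
        have hx1 : x ≠ s1 := fun h => hxS (h ▸ a1)
        refine hJ4 j hj x hx (M x) (hM2 x hx0 hx1) ?_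
        intro h
        have h' : (x = u ∧ M x = v) ∨ (x = v ∧ M x = u) := by simpa using h
        clear h
        rcases h' with ⟨rfl, h⟩ | ⟨rfl, h⟩
        · exact hne h
        · have := (hM1 x hx0 hx1).2.2.2
          rw [h] at this
          exact hne this)
    omega
  exact hvw ((key v S h1 h0.1 h1'.1).symm.trans (key w S' h2 h0.2 h1'.2))
end

lemma comp_swap (G : SimpleGraph V) (u v : V) (T : Finset V) (x : V) :
    comp G u v T x = comp G v u T x := by
  have : cut G u v T = cut G v u T := by
    ext a b
    simp only [cut]
    rw [Sym2.eq_swap (a := u)]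
  ext y
  rw [mem_comp, mem_comp, this]

lemma Bar1.symm {G : SimpleGraph V} {u v : V} {T : Finset V} (h : Bar1 G u v T) :
    Bar1 G v u T := by
  unfold Bar1 at *
  rw [Sym2.eq_swap (a := v)]
  exact h

lemma Bar2.symm {G : SimpleGraph V} {u v : V} {T : Finset V} (h : Bar2 G u v T) :
    Bar2 G v u T := by
  obtain ⟨h1, h2, h3, h4⟩ := h
  refine ⟨h1, h3, h2, ?_⟩
  intro h
  rw [comp_swap] at h
  apply h4
  rw [← comp_eq h]
  exact self_comp v

lemma exists_bar_conn {G : SimpleGraph V} (h3 : IsThreeConnected G) {u v : V} (huv : G.Adj u v)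
    (hn : ¬ IsThreeConnected (G.deleteEdges {s(u, v)})) : ∃ T, Bar2 G u v T := by
  classical
  have htc := tcp_of h3
  have h4 := h3.1
  unfold IsThreeConnected at hn
  push Not at hn
  obtain ⟨S0, hS0, hc⟩ := hn h4
  obtain ⟨S, rfl⟩ : ∃ S : Finset V, (S : Set V) = S0 := ⟨S0.toFinset, by simp⟩
  rw [Set.ncard_coe_finset] at hS0
  have hne : Nonempty ((S : Set V)ᶜ : Set V) := by
    by_contra hcon
    have : S = Finset.univ := by
      ext x
      simp only [Finset.mem_univ, iff_true]
      by_contra hx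
      exact hcon ⟨⟨x, by simpa using hx⟩⟩
    rw [this, Finset.card_univ] at hS0
    omega
  have hpre : ¬ ((G.deleteEdges {s(u, v)}).induce (S : Set V)ᶜ).Preconnected := by
    intro hp
    exact hc { preconnected := hp, nonempty := hne }
  unfold SimpleGraph.Preconnected at hpre
  push Not at hpre
  obtain ⟨⟨a, ha⟩, ⟨b, hb⟩, hab⟩ := hpre
  have ha' : a ∉ S := by simpa using ha
  have hb' : b ∉ S := by simpa using hb
  have hbX : b ∉ comp G u v S a := by
    intro hbX
    obtain ⟨h, hr⟩ := comp_min (T := S)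
      (fun y => ∃ h : y ∈ ((S : Set V)ᶜ : Set V),
        ((G.deleteEdges {s(u, v)}).induce (S : Set V)ᶜ).Reachable ⟨a, ha⟩ ⟨y, h⟩)
      ⟨ha, SimpleGraph.Reachable.refl _⟩ (by
        rintro z y ⟨hz, hr⟩ hzy hne hzS hyS
        refine ⟨by simpa using hyS, hr.trans (SimpleGraph.Adj.reachable ?_)⟩
        simp only [SimpleGraph.comap_adj, SimpleGraph.deleteEdges_adj, Set.mem_singleton_iff]
        exact ⟨hzy, hne⟩) b hbX
    exact hab hr
  obtain ⟨x, hx, y, hxy, hyX, hyS⟩ : ∃ x ∈ comp G u v S a, ∃ y, G.Adj x y ∧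
      y ∉ comp G u v S a ∧ y ∉ S := by
    by_contra hcon
    push Not at hcon
    refine htc (comp G u v S a) S a b hS0 (self_comp a) ha' hbX hb' ?_
    intro x hx y hxy
    by_cases hy : y ∈ comp G u v S a
    · exact Or.inl hy
    · exact Or.inr (hcon x hx y hxy hy)
  have hxS := comp_notT ha' x hx
  have hs : s(x, y) = s(u, v) := by
    by_contra hne
    rcases comp_cl ha' hx hxy hne with h | h
    · exact hyX h
    · exact hyS h
  have hyx : y ∉ comp G u v S x := by rwa [← comp_eq hx]
  have hsep : u ∉ S ∧ v ∉ S ∧ v ∉ comp G u v S u := by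
    have h' : (x = u ∧ y = v) ∨ (x = v ∧ y = u) := by simpa using hs
    rcases h' with ⟨h1, h2⟩ | ⟨h1, h2⟩
    · rw [h1] at hxS hyx
      rw [h2] at hyS hyx
      exact ⟨hxS, hyS, hyx⟩
    · rw [h1] at hxS hyx
      rw [h2] at hyS hyx
      refine ⟨hyS, hxS, fun h => hyx ?_⟩
      rw [← comp_eq h]
      exact self_comp u
  obtain ⟨huS, hvS, hvu⟩ := hsep
  obtain ⟨T, hST, hTu, hTc⟩ := Finset.exists_subsuperset_card_eq (s := S)
    (t := Finset.univ \ {u, v}) (n := 2) (by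
      intro z hz
      simp only [Finset.mem_sdiff, Finset.mem_univ, true_and, Finset.mem_insert,
        Finset.mem_singleton, not_or]
      constructor <;> rintro rfl <;> contradiction) hS0 (by
      rw [Finset.card_sdiff_of_subset (by simp), Finset.card_pair huv.ne, Finset.card_univ]
      omega)
  have hTu' : ∀ z ∈ T, z ≠ u ∧ z ≠ v := by
    intro z hz
    have := hTu hz
    simpa using this
  exact ⟨T, hTc, fun h => (hTu' u h).1 rfl, fun h => (hTu' v h).2 rfl,
    fun h => hvu (comp_antitone hST u h)⟩

lemma exists_bar_match {G : SimpleGraph V} (hev : Even (Fintype.card V)) {u v : V}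
    {x y : V} (hxy : x ≠ y)
    (hn : ¬ HasPerfectMatching ((G.deleteEdges {s(u, v)}).induce ({x, y} : Set V)ᶜ)) :
    ∃ T, Bar1 G u v T := by
  classical
  unfold HasPerfectMatching at hn
  rw [SimpleGraph.tutte] at hn
  push Not at hn
  obtain ⟨U, hU⟩ := hn
  unfold SimpleGraph.IsTutteViolator at hU
  set H := ((⊤ : ((G.deleteEdges {s(u, v)}).induce ({x, y} : Set V)ᶜ).Subgraph).deleteVerts U).coe
    with hH
  set T : Finset V := {x, y} ∪ U.toFinset.image Subtype.val with hT
  have hTm : ∀ z, z ∉ T ↔ ∃ h : z ∈ ({x, y} : Set V)ᶜ, (⟨z, h⟩ : (({x, y} : Set V)ᶜ : Set V)) ∉ U := by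
    intro z
    simp only [hT, Finset.mem_union, Finset.mem_insert, Finset.mem_singleton, Finset.mem_image,
      Set.mem_toFinset, Subtype.exists, exists_and_right, exists_eq_right, Set.mem_compl_iff,
      Set.mem_insert_iff, Set.mem_singleton_iff, not_or, not_exists]
    grind
  have hTc : T.card = U.ncard + 2 := by
    rw [hT, Finset.card_union_of_disjoint, Finset.card_pair hxy,
      Finset.card_image_of_injective _ Subtype.val_injective, Set.ncard_eq_toFinset_card']
    · ring
    · rw [Finset.disjoint_right]
      intro z hz
      obtain ⟨⟨z', hz'⟩, -, rfl⟩ := Finset.mem_image.1 hz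
      simpa using hz'
  let φ : ((⊤ : ((G.deleteEdges {s(u, v)}).induce ({x, y} : Set V)ᶜ).Subgraph).deleteVerts U).verts
    → V := fun z => z.1.1
  have hφ : Function.Injective φ := Subtype.val_injective.comp Subtype.val_injective
  have hφT : ∀ z, φ z ∉ T := by
    rintro ⟨⟨z, hz⟩, hz'⟩
    rw [hTm]
    exact ⟨hz, by simpa using hz'⟩
  have hφs : ∀ z, z ∉ T → ∃ z', φ z' = z := by
    intro z hz
    obtain ⟨h1, h2⟩ := (hTm z).1 hz
    exact ⟨⟨⟨z, h1⟩, by simpa using h2⟩, rfl⟩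
  have hadj : ∀ a b, G.Adj (φ a) (φ b) → s(φ a, φ b) ≠ s(u, v) → H.Adj a b := by
    intro a b hab hne
    rw [hH, Subgraph.coe_adj, Subgraph.deleteVerts_adj]
    refine ⟨trivial, by simpa using a.2, trivial, by simpa using b.2, ?_⟩
    simp only [Subgraph.top_adj, SimpleGraph.comap_adj, SimpleGraph.deleteEdges_adj,
      Set.mem_singleton_iff]
    exact ⟨hab, hne⟩
  have hfin : ∀ c : H.ConnectedComponent, Fintype c.supp := fun c => Fintype.ofFinite _
  have hfin2 : Fintype H.oddComponents := Fintype.ofFinite _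
  refine ⟨T, Bar1_of hev T (by omega) H.oddComponents.toFinset
    (fun c => c.supp.toFinset.image φ) ?_ ?_ ?_ ?_ ?_⟩
  · rw [← Set.ncard_eq_toFinset_card']; omega
  · intro c hc
    rw [Finset.card_image_of_injective _ hφ, ← Set.ncard_eq_toFinset_card']
    simpa using hc
  · intro c hc z hz
    obtain ⟨z', -, rfl⟩ := Finset.mem_image.1 hz
    exact hφT z'
  · intro c hc d hd z hz hz'
    obtain ⟨a, ha, rfl⟩ := Finset.mem_image.1 hz
    obtain ⟨b, hb, hab⟩ := Finset.mem_image.1 hz'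
    have := hφ hab
    subst this
    rw [Set.mem_toFinset, ConnectedComponent.mem_supp_iff] at ha hb
    exact ha.symm.trans hb
  · intro c hc z hz y' hzy hne
    obtain ⟨a, ha, rfl⟩ := Finset.mem_image.1 hz
    by_cases hy : y' ∈ T
    · exact Or.inr hy
    · left
      obtain ⟨b, rfl⟩ := hφs y' hy
      refine Finset.mem_image_of_mem _ ?_
      rw [Set.mem_toFinset, ConnectedComponent.mem_supp_iff] at ha ⊢
      rw [← ha]
      exact (ConnectedComponent.eq.2 (hadj a b hzy hne).reachable).symm

lemma exists_bar {G : SimpleGraph V} (h : IsMinimalBrick G) {u v : V} (huv : G.Adj u v) :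
    ∃ T, Bar1 G u v T ∨ Bar2 G u v T := by
  have hn := h.2 s(u, v) huv
  unfold IsBrick at hn
  by_cases h3 : IsThreeConnected (G.deleteEdges {s(u, v)})
  · have : ∃ x y, x ≠ y ∧
        ¬ HasPerfectMatching ((G.deleteEdges {s(u, v)}).induce ({x, y} : Set V)ᶜ) := by
      by_contra hcon
      push Not at hcon
      exact hn ⟨h3, hcon⟩
    obtain ⟨x, y, hxy, hp⟩ := this
    obtain ⟨T, hT⟩ := exists_bar_match (even_card h.1) hxy hp
    exact ⟨T, Or.inl hT⟩
  · obtain ⟨T, hT⟩ := exists_bar_conn h.1.1 huv h3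
    exact ⟨T, Or.inr hT⟩

lemma minDeg {G : SimpleGraph V} (h : IsThreeConnected G) (u : V) (X : Finset V)
    (hX : ∀ y, G.Adj u y ↔ y ∈ X) : 3 ≤ X.card := by
  by_contra hcon
  have huX : u ∉ X := fun hu => ((hX u).2 hu).ne rfl
  have h4 := h.1
  obtain ⟨z, hz⟩ : ∃ z, z ∉ insert u X := by
    by_contra hc
    push Not at hc
    have : (insert u X) = Finset.univ := by ext z; simp [hc z]
    have h1 := Finset.card_insert_le u X
    rw [this, Finset.card_univ] at h1
    omega
  rw [Finset.mem_insert, not_or] at hz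
  refine tcp_of h {u} X u z (by omega) (by simp) huX (by simpa using hz.1) hz.2 ?_
  intro x hx y hxy
  rw [Finset.mem_singleton] at hx
  subst hx
  exact Or.inr ((hX y).1 hxy)

open Classical in
theorem main {V : Type*} [Fintype V]
    (G : SimpleGraph V) (hG : IsMinimalBrick G) :
    3 ≤ {v : V | (G.neighborSet v).ncard = 3}.ncard := by
  by_contra hcon
  set C : Finset V := {v : V | (G.neighborSet v).ncard = 3}.toFinset with hC
  have hCc : C.card ≤ 2 := by
    rw [hC, ← Set.ncard_eq_toFinset_card']
    omega
  have htc := tcp_of hG.1.1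
  have hbi := bip_of hG.1
  have hev := even_card hG.1
  have h4 := hG.1.1.1
  have hN : ∀ u y, G.Adj u y ↔ y ∈ (G.neighborSet u).toFinset := by intro u y; simp
  have hdeg : ∀ u, u ∉ C → 4 ≤ (G.neighborSet u).toFinset.card := by
    intro u hu
    have h1 := minDeg hG.1.1 u _ (hN u)
    have h2 : (G.neighborSet u).toFinset.card ≠ 3 := by
      intro h
      apply hu
      rw [← Set.ncard_eq_toFinset_card'] at h
      simpa [hC] using h
    omega
  have hnb : ∀ u v, u ∉ C → ∃ w, w ∉ C ∧ w ≠ v ∧ G.Adj u w := by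
    intro u v hu
    have h1 := hdeg u hu
    obtain ⟨w, hw, hw'⟩ : ∃ w ∈ (G.neighborSet u).toFinset, w ∉ insert v C := by
      by_contra hc
      push Not at hc
      have h2 := Finset.card_le_card (show (G.neighborSet u).toFinset ⊆ insert v C from hc)
      have := Finset.card_insert_le v C
      omega
    rw [Finset.mem_insert, not_or] at hw'
    exact ⟨w, hw'.2, hw'.1, (hN u w).2 hw⟩
  obtain ⟨x0, hx0⟩ : ∃ x, x ∉ C := by
    by_contra hc
    push Not at hc
    have : C = Finset.univ := by ext z; simp [hc z]
    rw [this, Finset.card_univ] at hCc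
    omega
  -- the triples
  let W : Finset (V × V × Finset V) := Finset.univ.filter (fun p =>
    p.1 ∉ C ∧ p.2.1 ∉ C ∧ G.Adj p.1 p.2.1 ∧ (Bar1 G p.1 p.2.1 p.2.2 ∨ Bar2 G p.1 p.2.1 p.2.2))
  have hW : ∀ u v T, (u, v, T) ∈ W ↔ u ∉ C ∧ v ∉ C ∧ G.Adj u v ∧
      (Bar1 G u v T ∨ Bar2 G u v T) := by
    intro u v T; simp [W]
  have hWne : W.Nonempty := by
    obtain ⟨w, hw, -, huw⟩ := hnb x0 x0 hx0
    obtain ⟨T, hT⟩ := exists_bar hG huw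
    exact ⟨(x0, w, T), (hW _ _ _).2 ⟨hx0, hw, huw, hT⟩⟩
  let φ : V × V × Finset V → ℕ := fun p => (comp G p.1 p.2.1 p.2.2 p.2.1).card
  obtain ⟨⟨u0, v0, T0⟩, hm0, hmax0⟩ := Finset.exists_max_image W φ hWne
  obtain ⟨u, v, S, PP, hm, hmax, hstr, hty⟩ : ∃ u v S PP, (u, v, S) ∈ W ∧
      (∀ p ∈ W, φ p ≤ φ (u, v, S)) ∧
      Str G u v S (comp G u v S u) (comp G u v S v) PP ∧
      (Bar1 G u v S ∨ PP = {comp G u v S u, comp G u v S v}) := by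
    by_cases hex : (W.filter (fun p => φ p = φ (u0, v0, T0) ∧ Bar1 G p.1 p.2.1 p.2.2)).Nonempty
    · obtain ⟨⟨u, v, S⟩, hm, hmx⟩ := Finset.exists_max_image _ (fun p => p.2.2.card) hex
      rw [Finset.mem_filter] at hm
      obtain ⟨hmW, hφ, hb⟩ := hm
      refine ⟨u, v, S, comps G u v S, hmW, fun p hp => hφ ▸ hmax0 p hp, ?_, Or.inl hb⟩
      have hW' := (hW _ _ _).1 hmW
      refine build1 hbi hev hW'.2.2.1 hb ?_
      intro T2 hT2 hb2 hBT
      have hv : v ∉ S := fun h => hBT v (self_comp v) (hT2 h)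
      have hT2W : (u, v, T2) ∈ W := (hW _ _ _).2 ⟨hW'.1, hW'.2.1, hW'.2.2.1, Or.inl hb2⟩
      have h1 : φ (u, v, S) ≤ φ (u, v, T2) := Finset.card_le_card (comp_grow v hv hBT)
      have h2 := hmax0 _ hT2W
      have h3 := hmx (u, v, T2) (Finset.mem_filter.2 ⟨hT2W, by omega, hb2⟩)
      exact (Finset.eq_of_subset_of_card_le hT2 h3).symm
    · have hW' := (hW _ _ _).1 hm0
      have hb : Bar2 G u0 v0 T0 := by
        rcases hW'.2.2.2 with h | h
        · exact absurd ⟨(u0, v0, T0), Finset.mem_filter.2 ⟨hm0, rfl, h⟩⟩ hex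
        · exact h
      exact ⟨u0, v0, T0, _, hm0, hmax0, build2 htc hb, Or.inr rfl⟩
  obtain ⟨huC, hvC, huv, hbar⟩ := (hW _ _ _).1 hm
  obtain ⟨w, hwC, hwv, huw⟩ := hnb u v huC
  obtain ⟨S', QQ, hbar', hstr', hty'⟩ : ∃ S' QQ, (Bar1 G u w S' ∨ Bar2 G u w S') ∧
      Str G u w S' (comp G u w S' u) (comp G u w S' w) QQ ∧
      (Bar1 G u w S' ∨ QQ = {comp G u w S' u, comp G u w S' w}) := by
    by_cases hex : (Finset.univ.filter (fun T => Bar1 G u w T)).Nonempty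
    · obtain ⟨S', hm, hmx⟩ := Finset.exists_max_image _ (fun T => T.card) hex
      have hb := (Finset.mem_filter.1 hm).2
      refine ⟨S', comps G u w S', Or.inl hb, build1 hbi hev huw hb ?_, Or.inl hb⟩
      intro T2 hT2 hb2 _
      exact (Finset.eq_of_subset_of_card_le hT2 (hmx T2 (by simpa using hb2))).symm
    · obtain ⟨T, hT⟩ := exists_bar hG huw
      have hb : Bar2 G u w T := by
        rcases hT with h | h
        · exact absurd ⟨T, by simpa using h⟩ hex
        · exact h
      exact ⟨T, _, Or.inr hb, build2 htc hb, Or.inr rfl⟩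
  have hmax' : ∀ a b T, a ∉ C → b ∉ C → G.Adj a b → (Bar1 G a b T ∨ Bar2 G a b T) →
      (comp G a b T a).card ≤ (comp G u v S v).card := by
    intro a b T ha hb hab hT
    have := hmax (b, a, T) ((hW _ _ _).2 ⟨hb, ha, hab.symm, hT.imp Bar1.symm Bar2.symm⟩)
    rw [comp_swap]
    exact this
  have huB : u ∉ comp G u v S v := fun h =>
    hstr.nAB (hstr.dj _ hstr.mA _ hstr.mB u (self_comp u) h)
  have cfg : Cfg G u v w S (comp G u v S u) (comp G u v S v) S' (comp G u w S' u)
      (comp G u w S' w) PP QQ := by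
    refine ⟨hbi, htc, hev, hstr, hstr', hwv.symm, huv, huw, ?_, hmax' u v S huC hvC huv hbar,
      hmax' u w S' huC hwC huw hbar', ?_, ?_⟩
    · intro X hX
      refine (hdeg u huC).trans (Finset.card_le_card ?_)
      intro y hy
      exact hX y ((hN u y).2 hy)
    · intro T hT hBT huT
      have h1 := hmax' u w T huC hwC huw (Or.inl hT)
      have hne : ∀ z y, z ∈ comp G u v S v → y ∈ comp G u v S v → s(z, y) ≠ s(u, w) := by
        intro z y hz hy h
        have h' : (z = u ∧ y = w) ∨ (z = w ∧ y = u) := by simpa using h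
        rcases h' with ⟨rfl, -⟩ | ⟨-, rfl⟩
        · exact huB hz
        · exact huB hy
      have hvcomp : v ∈ comp G u w T u := by
        refine (comp_cl huT (self_comp u) huv ?_).resolve_right (hBT v (self_comp v))
        intro h
        have h' : v = w ∨ (u = w ∧ v = u) := by simpa using h
        rcases h' with h | ⟨h, -⟩
        · exact hwv h.symm
        · exact huw.ne h
      have hsub := hstr.conn (comp G u v S v ∩ comp G u w T u)
        (Finset.mem_inter.2 ⟨self_comp v, hvcomp⟩) Finset.inter_subset_left (by
          intro z hz y hy hzy
          rw [Finset.mem_inter] at hz ⊢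
          exact ⟨hy, (comp_cl huT hz.2 hzy (hne z y hz.1 hy)).resolve_right (hBT y hy)⟩)
      have h2 : insert u (comp G u v S v) ⊆ comp G u w T u := by
        intro z hz
        rcases Finset.mem_insert.1 hz with rfl | hz
        · exact self_comp z
        · exact (Finset.mem_inter.1 (hsub hz)).2
      have h3 := Finset.card_le_card h2
      rw [Finset.card_insert_of_notMem huB] at h3
      omega
    · rcases hty with h1 | h1
      · rcases hty' with h2 | h2
        · exact Or.inl (t_le_one hbi h1 h2 hwv.symm (hstr.dS _ hstr.mA u (self_comp u)))
        · exact Or.inr (Or.inr h2)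
      · exact Or.inr (Or.inl h1)
  exact cfg.false

end MB

theorem minimalBrick_three_cubic_vertices {V : Type*} [Fintype V]
    (G : SimpleGraph V) (hG : IsMinimalBrick G) :
    3 ≤ {v : V | (G.neighborSet v).ncard = 3}.ncard := by
  exact MB.main G hG
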